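/- arXiv:2312.17170 — 17 statements merged into one kernel-verified Lean document; each statement's English description precedes it below -/
import Mathlib

section
/- Let R be a commutative ring with only finitely many minimal prime ideals. Then R is a multiplication ring if and only if R is isomorphic (as a ring) to a finite direct product ∏_{i=1}^{n} D_i of commutative rings, where each D_i is either a Dedekind domain or an Artinian, local, principal ideal ring. -/
/-!
In a local multiplication ring `(R, m)` the maximal ideal is principal, and Nakayama's lemma shows
that either `R` is a domain or `m` is nilpotent (`IsMultiplicationRing.isDomain_or_nilpotent`).
The multiplication property passes to localizations, so this dichotomy holds in every `R_m`. It
follows that a maximal ideal contains exactly one minimal prime, whence distinct minimal primes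
are comaximal, and that each minimal prime `P` has a power `P ^ e` vanishing in `R_m` for every
maximal `m ≥ P`, with `e = 1` unless `P` is maximal. If the minimal primes are finite in number,
the intersection of these powers vanishes locally, hence is zero, and the Chinese remainder
theorem gives `R ≃ ∏ R / P ^ e`. The factors are again multiplication rings: domains, which are
Dedekind because all their nonzero ideals are invertible, or, for `P` maximal, local rings whose
maximal ideal is principal and nilpotent.

Conversely, an ideal of a Dedekind domain or of a principal ideal ring divides every ideal that it
contains, and this property can be checked factorwise in a finite product.
-/

/-- A commutative ring `R` is a multiplication ring if for all ideals `I`, `J` of `R` with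
`J ⊆ I` there exists an ideal `I'` of `R` such that `J = I'I`. -/
def IsMultiplicationRing (R : Type*) [CommRing R] : Prop :=
  ∀ I J : Ideal R, J ≤ I → ∃ I' : Ideal R, J = I' * I

/-! ### Quotients, localizations and products -/

/-- If every ideal of `S` is extended from `R`, then `S` inherits the multiplication property. -/
theorem IsMultiplicationRing.of_map_comap {R S : Type*} [CommRing R] [CommRing S] (f : R →+* S)
    (hf : ∀ I : Ideal S, (I.comap f).map f = I) (h : IsMultiplicationRing R) :
    IsMultiplicationRing S := by
  intro I J hJI
  obtain ⟨K, hK⟩ := h _ _ (Ideal.comap_mono (f := f) hJI)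
  refine ⟨K.map f, ?_⟩
  rw [← hf J, hK, Ideal.map_mul, hf]

theorem IsMultiplicationRing.of_surjective {R S : Type*} [CommRing R] [CommRing S] (f : R →+* S)
    (hf : Function.Surjective f) (h : IsMultiplicationRing R) : IsMultiplicationRing S :=
  h.of_map_comap f (Ideal.map_comap_of_surjective f hf)

theorem isMultiplicationRing_of_isDedekindDomain (R : Type*) [CommRing R] [IsDedekindDomain R] :
    IsMultiplicationRing R := by
  intro I J hJI
  obtain ⟨K, hK⟩ := Ideal.dvd_iff_le.mpr hJI
  exact ⟨K, by rw [hK, mul_comm]⟩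

theorem isMultiplicationRing_of_isPrincipalIdealRing (R : Type*) [CommRing R]
    [IsPrincipalIdealRing R] : IsMultiplicationRing R := by
  intro I J hJI
  obtain ⟨a, ha⟩ := (IsPrincipalIdealRing.principal I).principal
  obtain ⟨b, hb⟩ := (IsPrincipalIdealRing.principal J).principal
  change I = Ideal.span {a} at ha
  change J = Ideal.span {b} at hb
  subst ha hb
  obtain ⟨c, hc⟩ := Ideal.mem_span_singleton'.mp (hJI (Ideal.mem_span_singleton_self b))
  exact ⟨Ideal.span {c}, by rw [Ideal.span_singleton_mul_span_singleton, hc]⟩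

/-- An ideal of a finite product is determined by its projections to the factors. -/
theorem mem_ideal_pi_iff {n : ℕ} {D : Fin n → Type*} [∀ i, CommRing (D i)]
    (J : Ideal (∀ i, D i)) (x : ∀ i, D i) :
    x ∈ J ↔ ∀ i, x i ∈ J.map (Pi.evalRingHom D i) := by
  refine ⟨fun hx i => Ideal.mem_map_of_mem (Pi.evalRingHom D i) hx, fun h => ?_⟩
  rw [← Finset.univ_sum_single x]
  refine J.sum_mem fun i _ => ?_
  obtain ⟨y, hy, hyx⟩ := (Ideal.mem_map_iff_of_surjective (Pi.evalRingHom D i)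
    (Function.surjective_eval i)).mp (h i)
  have : (Pi.single i (x i) : ∀ i, D i) = Pi.single i 1 * y := by
    rw [← hyx]
    ext j
    rcases eq_or_ne j i with rfl | hj
    · simp
    · simp [hj]
  rw [this]
  exact J.mul_mem_left _ hy

theorem isMultiplicationRing_pi {n : ℕ} {D : Fin n → Type*} [∀ i, CommRing (D i)]
    (h : ∀ i, IsMultiplicationRing (D i)) : IsMultiplicationRing (∀ i, D i) := by
  intro I J hJI
  choose K hK using fun i => h i _ _ (Ideal.map_mono (f := Pi.evalRingHom D i) hJI)
  refine ⟨Ideal.pi K, ?_⟩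
  have key : ∀ i, (Ideal.pi K).map (Pi.evalRingHom D i) = K i := by
    intro i
    apply le_antisymm
    · rw [Ideal.map_le_iff_le_comap]
      intro x hx
      exact (Ideal.mem_pi _ _).mp hx i
    · intro a ha
      refine (Ideal.mem_map_iff_of_surjective (Pi.evalRingHom D i)
        (Function.surjective_eval i)).mpr ⟨Pi.single i a, (Ideal.mem_pi _ _).mpr fun j => ?_, ?_⟩
      · rcases eq_or_ne j i with rfl | hj
        · simpa using ha
        · simp [hj]
      · simp
  ext x
  rw [mem_ideal_pi_iff, mem_ideal_pi_iff]
  refine forall_congr' fun i => ?_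
  rw [hK i, Ideal.map_mul, key]

/-! ### Multiplication domains -/

/-- In a multiplication domain every nonzero ideal contains, hence divides, a nonzero principal
ideal, so it is invertible. -/
theorem IsMultiplicationRing.isDedekindDomain {R : Type*} [CommRing R] [IsDomain R]
    (h : IsMultiplicationRing R) : IsDedekindDomain R := by
  rw [isDedekindDomain_iff_mul_inv_cancel (K := FractionRing R)]
  intro I hI
  rw [FractionalIdeal.mul_inv_cancel_iff_isUnit]
  obtain ⟨a, J, ha, rfl⟩ := FractionalIdeal.exists_eq_spanSingleton_mul I
  have hJ : J ≠ ⊥ := by rintro rfl; simp at hI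
  have unit_span : ∀ y : FractionRing R, y ≠ 0 →
      IsUnit (FractionalIdeal.spanSingleton (nonZeroDivisors R) y) := fun y hy =>
    IsUnit.of_mul_eq_one _ (FractionalIdeal.spanSingleton_mul_inv _ hy)
  obtain ⟨x, hx, hx0⟩ := Submodule.exists_mem_ne_zero_of_ne_bot hJ
  obtain ⟨K, hK⟩ := h J (Ideal.span {x}) ((Ideal.span_singleton_le_iff_mem _).mpr hx)
  refine IsUnit.mul (unit_span _ ?_) ?_
  · simpa using ha
  · refine isUnit_of_mul_isUnit_right (x := (K : FractionalIdeal _ (FractionRing R))) ?_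
    rw [← FractionalIdeal.coeIdeal_mul, ← hK, FractionalIdeal.coeIdeal_span_singleton]
    exact unit_span _ (by simpa using hx0)

/-! ### Local multiplication rings -/

section Local

variable {R : Type*} [CommRing R] [IsLocalRing R]

open IsLocalRing

theorem eq_zero_of_mul_mem_maximalIdeal {a y : R} (hy : y ∈ maximalIdeal R) (h : a * y = a) :
    a = 0 := by
  have hu : IsUnit (1 - y) := by
    by_contra hn
    have h1 := (maximalIdeal R).add_mem ((mem_maximalIdeal _).mpr hn) hy
    rw [sub_add_cancel] at h1
    exact (mem_maximalIdeal _).mp h1 isUnit_one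
  exact (hu.mul_left_eq_zero).mp (by rw [mul_sub, mul_one, h, sub_self])

/-- Nakayama's lemma for a principal ideal. -/
theorem eq_zero_of_span_le_mul_maximalIdeal {a : R}
    (h : Ideal.span {a} ≤ Ideal.span {a} * maximalIdeal R) : a = 0 := by
  obtain ⟨y, hy, hay⟩ := Ideal.mem_span_singleton_mul.mp (h (Ideal.mem_span_singleton_self a))
  exact eq_zero_of_mul_mem_maximalIdeal hy hay

/-- If `x ∈ m \ m²` then `(x) = I * m` forces `I` to be the unit ideal; if `m = m²` then
`(x) = (x) * m` for every `x ∈ m`, so `m = 0`. -/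
theorem IsMultiplicationRing.exists_maximalIdeal_eq_span (h : IsMultiplicationRing R) :
    ∃ x : R, maximalIdeal R = Ideal.span {x} := by
  by_cases hm : maximalIdeal R ≤ maximalIdeal R * maximalIdeal R
  · refine ⟨0, le_antisymm (fun x hx => ?_) (by simp)⟩
    obtain ⟨I, hI⟩ := h (maximalIdeal R) (Ideal.span {x})
      ((Ideal.span_singleton_le_iff_mem _).mpr hx)
    have : x = 0 := eq_zero_of_span_le_mul_maximalIdeal <| by
      conv_lhs => rw [hI]
      rw [hI, mul_assoc]
      exact Ideal.mul_mono_right hm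
    simp [this]
  · obtain ⟨x, hx, hx2⟩ := SetLike.not_le_iff_exists.mp hm
    obtain ⟨I, hI⟩ := h (maximalIdeal R) (Ideal.span {x})
      ((Ideal.span_singleton_le_iff_mem _).mpr hx)
    refine ⟨x, ?_⟩
    by_cases hI1 : I = ⊤
    · rw [hI, hI1, Ideal.top_mul]
    · refine absurd ?_ hx2
      refine Ideal.mul_mono_left (le_maximalIdeal hI1) ?_
      rw [← hI]
      exact Ideal.mem_span_singleton_self x

/-- A local multiplication ring is a domain unless its maximal ideal `m = (x)` is nilpotent.
Elements outside `P = ⋂ mⁿ` are units times powers of `x`, so `P` is prime and `P = P * m`.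
For `a ∈ P`, writing `(a) = I * P` gives `(a) = (a) * m`, so `a = 0`. -/
theorem IsMultiplicationRing.isDomain_or_nilpotent (h : IsMultiplicationRing R) :
    IsDomain R ∨ ∃ n : ℕ, maximalIdeal R ^ n = ⊥ := by
  obtain ⟨x, hx⟩ := h.exists_maximalIdeal_eq_span
  rw [or_iff_not_imp_right]
  intro hnil
  push Not at hnil
  have hxm : x ∈ maximalIdeal R := hx ▸ Ideal.mem_span_singleton_self x
  have hpow : ∀ n, maximalIdeal R ^ n = Ideal.span {x ^ n} := fun n => by
    rw [hx, Ideal.span_singleton_pow]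
  let P : Ideal R := ⨅ n : ℕ, maximalIdeal R ^ n
  have hP : ∀ a, a ∈ P ↔ ∀ n : ℕ, a ∈ maximalIdeal R ^ n := fun a => Submodule.mem_iInf _
  have hxP : ∀ n, x ^ n ∉ P := by
    intro n hn
    have h1 := (hP _).mp hn (n + 1)
    rw [hpow, Ideal.mem_span_singleton'] at h1
    obtain ⟨c, hc⟩ := h1
    have h0 : x ^ n = 0 := by
      refine eq_zero_of_mul_mem_maximalIdeal (y := x * c)
        (Ideal.mul_mem_right _ _ hxm) ?_
      linear_combination hc
    apply hnil n
    rw [hpow, h0]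
    simp
  have hform : ∀ a, a ∉ P → ∃ (n : ℕ) (u : R), IsUnit u ∧ a = u * x ^ n := by
    intro a ha
    rw [hP] at ha
    push Not at ha
    classical
    have h1 := Nat.find_spec ha
    rcases hn : Nat.find ha with _ | n
    · rw [hn] at h1; simp at h1
    · have h2 := Nat.find_min ha (m := n) (by omega)
      rw [not_not, hpow, Ideal.mem_span_singleton'] at h2
      obtain ⟨c, rfl⟩ := h2
      refine ⟨n, c, ?_, rfl⟩
      by_contra hc
      apply h1
      rw [hn, pow_succ']
      exact Ideal.mul_mem_mul ((mem_maximalIdeal _).mpr hc) (Ideal.pow_mem_pow hxm n)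
  have hPm : P ≤ maximalIdeal R := fun a ha => by simpa using (hP a).mp ha 1
  have hprime : P.IsPrime := by
    rw [Ideal.isPrime_iff]
    refine ⟨fun ht => Ideal.IsPrime.ne_top' (I := maximalIdeal R) (top_le_iff.mp (ht ▸ hPm)), ?_⟩
    intro a b hab
    by_contra! hcon
    obtain ⟨n, u, hu, rfl⟩ := hform a hcon.1
    obtain ⟨k, v, hv, rfl⟩ := hform b hcon.2
    have h3 : u * x ^ n * (v * x ^ k) = (u * v) * x ^ (n + k) := by ring
    rw [h3, Ideal.unit_mul_mem_iff_mem _ (hu.mul hv)] at hab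
    exact hxP _ hab
  have hPP : P ≤ P * maximalIdeal R := by
    intro p hp
    have h1 := hPm hp
    rw [hx, Ideal.mem_span_singleton'] at h1
    obtain ⟨b, rfl⟩ := h1
    refine Ideal.mul_mem_mul ((hprime.mem_or_mem hp).resolve_right ?_) hxm
    simpa using hxP 1
  have hbot : P = ⊥ := by
    rw [eq_bot_iff]
    intro a ha
    obtain ⟨I, hI⟩ := h P (Ideal.span {a}) ((Ideal.span_singleton_le_iff_mem _).mpr ha)
    refine eq_zero_of_span_le_mul_maximalIdeal ?_
    conv_lhs => rw [hI]
    rw [hI, mul_assoc]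
    exact Ideal.mul_mono_right hPP
  rw [hbot] at hprime
  exact IsDomain.of_bot_isPrime R

theorem IsMultiplicationRing.isArtinianRing_and_isPrincipalIdealRing
    (h : IsMultiplicationRing R) {n : ℕ} (hn : maximalIdeal R ^ n = ⊥) :
    IsArtinianRing R ∧ IsPrincipalIdealRing R := by
  have hprime : ∀ P : Ideal R, P.IsPrime → P = maximalIdeal R := fun P hP =>
    le_antisymm (le_maximalIdeal hP.ne_top) (hP.le_of_pow_le (n := n) (hn ▸ bot_le))
  have hpir : IsPrincipalIdealRing R := .of_prime fun P hP => by
    obtain ⟨x, hx⟩ := h.exists_maximalIdeal_eq_span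
    exact ⟨x, (hprime P hP).trans hx⟩
  have : Ring.KrullDimLE 0 R := Ring.krullDimLE_zero_iff.mpr fun P hP => by
    rw [hprime P hP]; infer_instance
  exact ⟨isArtinianRing_iff_isNoetherianRing_krullDimLE_zero.mpr ⟨inferInstance, this⟩, hpir⟩

end Local

/-! ### Minimal primes of a multiplication ring -/

section Global

variable {R : Type*} [CommRing R]

/-- The dichotomy for the local ring `R_m`, expressed in `R`: for a minimal prime `P ≤ m`, either
`P` is the kernel of `R → R_m`, or `P = m` and a power of `m` vanishes in `R_m`. -/
theorem IsMultiplicationRing.minimalPrime_dichotomy (h : IsMultiplicationRing R)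
    {P m : Ideal R} (hP : P ∈ minimalPrimes R) (hm : m.IsMaximal) (hPm : P ≤ m) :
    (∀ x, x ∈ P ↔ ∃ s ∉ m, s * x = 0) ∨
      (P = m ∧ ∃ n : ℕ, ∀ x ∈ m ^ n, ∃ s ∉ m, s * x = 0) := by
  have hPp : P.IsPrime := hP.1.1
  have hmp : m.IsPrime := hm.isPrime
  let S := Localization.AtPrime m
  have hS : IsMultiplicationRing S :=
    h.of_map_comap (algebraMap R S) (IsLocalization.map_under m.primeCompl S)
  have hz : ∀ x : R, algebraMap R S x = 0 ↔ ∃ s ∉ m, s * x = 0 := fun x => by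
    rw [IsLocalization.map_eq_zero_iff m.primeCompl S]
    exact ⟨fun ⟨s, hs⟩ => ⟨s, s.2, hs⟩, fun ⟨s, hs, hx⟩ => ⟨⟨s, hs⟩, hx⟩⟩
  have hker : ∀ x, (∃ s ∉ m, s * x = 0) → x ∈ P := fun x ⟨s, hs, hx⟩ =>
    (hPp.mem_or_mem (hx ▸ P.zero_mem : s * x ∈ P)).resolve_left fun hsP => hs (hPm hsP)
  rcases hS.isDomain_or_nilpotent with hd | ⟨n, hn⟩
  · left
    have hle : RingHom.ker (algebraMap R S) ≤ P := fun x hx => hker x ((hz x).mp hx)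
    have hge := hP.2 ⟨RingHom.ker_isPrime (algebraMap R S), bot_le⟩ hle
    exact fun x => ⟨fun hx => (hz x).mp (hge hx), hker x⟩
  · right
    have hnil : ∀ x ∈ m ^ n, ∃ s ∉ m, s * x = 0 := by
      intro x hx
      rw [← hz, ← Ideal.mem_bot, ← hn, ← Localization.AtPrime.map_eq_maximalIdeal, ← Ideal.map_pow]
      exact Ideal.mem_map_of_mem _ hx
    exact ⟨le_antisymm hPm (hPp.le_of_pow_le (n := n) fun x hx => hker x (hnil x hx)), n, hnil⟩

theorem IsMultiplicationRing.minimalPrime_unique (h : IsMultiplicationRing R)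
    {P Q m : Ideal R} (hP : P ∈ minimalPrimes R) (hQ : Q ∈ minimalPrimes R) (hm : m.IsMaximal)
    (hPm : P ≤ m) (hQm : Q ≤ m) : P = Q := by
  have hle : ∀ {A B : Ideal R}, A ∈ minimalPrimes R → B ∈ minimalPrimes R → A ≤ B → A = B :=
    fun hA hB hAB => le_antisymm hAB (hB.2 hA.1 hAB)
  rcases h.minimalPrime_dichotomy hP hm hPm with h1 | ⟨rfl, -⟩
  · rcases h.minimalPrime_dichotomy hQ hm hQm with h2 | ⟨rfl, -⟩
    · ext x
      rw [h1, h2]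
    · exact hle hP hQ hPm
  · exact (hle hQ hP hQm).symm

/-- Each minimal prime `P` has a positive power that vanishes in `R_m` for every maximal `m ≥ P`;
the first power suffices when `P` is not maximal. -/
theorem IsMultiplicationRing.exists_exponent (h : IsMultiplicationRing R)
    {P : Ideal R} (hP : P ∈ minimalPrimes R) :
    ∃ e : ℕ, e ≠ 0 ∧ (P.IsMaximal ∨ e = 1) ∧
      ∀ m : Ideal R, m.IsMaximal → P ≤ m → ∀ x ∈ P ^ e, ∃ s ∉ m, s * x = 0 := by
  by_cases hmax : P.IsMaximal
  · have hm : ∀ m : Ideal R, m.IsMaximal → P ≤ m → m = P := fun m hm hPm =>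
      (hmax.eq_of_le hm.ne_top hPm).symm
    rcases h.minimalPrime_dichotomy hP hmax le_rfl with h1 | ⟨-, n, hn⟩
    · refine ⟨1, one_ne_zero, .inl hmax, fun m hm' hPm x hx => ?_⟩
      rw [hm m hm' hPm, ← h1]
      simpa using hx
    · refine ⟨n + 1, n.succ_ne_zero, .inl hmax, fun m hm' hPm x hx => ?_⟩
      rw [hm m hm' hPm]
      exact hn x (Ideal.pow_le_pow_right n.le_succ hx)
  · refine ⟨1, one_ne_zero, .inr rfl, fun m hm hPm x hx => ?_⟩
    rcases h.minimalPrime_dichotomy hP hm hPm with h1 | ⟨rfl, -⟩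
    · rw [← h1]
      simpa using hx
    · exact absurd hm hmax

theorem IsMultiplicationRing.quotient_pow (h : IsMultiplicationRing R) {P : Ideal R}
    (hP : P.IsMaximal) {e : ℕ} (he : e ≠ 0) :
    IsArtinianRing (R ⧸ P ^ e) ∧ IsLocalRing (R ⧸ P ^ e) ∧ IsPrincipalIdealRing (R ⧸ P ^ e) := by
  have hq : IsMultiplicationRing (R ⧸ P ^ e) :=
    h.of_surjective (Ideal.Quotient.mk _) Ideal.Quotient.mk_surjective
  have hsurj : Function.Surjective (Ideal.Quotient.mk (P ^ e)) := Ideal.Quotient.mk_surjective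
  have hker : RingHom.ker (Ideal.Quotient.mk (P ^ e)) ≤ P := by
    rw [Ideal.mk_ker]; exact Ideal.pow_le_self he
  have hmax : (P.map (Ideal.Quotient.mk (P ^ e))).IsMaximal :=
    Ideal.IsMaximal.map_of_surjective_of_ker_le hsurj hker
  have hpow : (P.map (Ideal.Quotient.mk (P ^ e))) ^ e = ⊥ := by
    rw [← Ideal.map_pow, Ideal.map_quotient_self]
  have hloc : IsLocalRing (R ⧸ P ^ e) := IsLocalRing.of_unique_max_ideal
    ⟨_, hmax, fun M hM => (hmax.eq_of_le hM.ne_top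
      (hM.isPrime.le_of_pow_le (n := e) (hpow ▸ bot_le))).symm⟩
  rw [IsLocalRing.eq_maximalIdeal hmax] at hpow
  obtain ⟨h1, h2⟩ := hq.isArtinianRing_and_isPrincipalIdealRing hpow
  exact ⟨h1, hloc, h2⟩

end Global

/-! ### The structure theorem -/

/-- Let `R` be a commutative ring with only finitely many minimal prime ideals. Then `R` is a
multiplication ring if and only if `R` is isomorphic (as a ring) to a finite direct product
`∏_{i=1}^{n} D_i` of commutative rings, where each `D_i` is either a Dedekind domain or an
Artinian, local, principal ideal ring. -/
theorem multiplicationRing_iff_prod_dedekind_or_artinianLocalPIR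
    {R : Type u} [CommRing R] (hfin : (minimalPrimes R).Finite) :
    IsMultiplicationRing R ↔
      ∃ (n : ℕ) (D : Fin n → Type u) (inst : ∀ i, CommRing (D i)),
        Nonempty (R ≃+* ((i : Fin n) → D i)) ∧
        ∀ i, IsDedekindDomain (D i) ∨
          (IsArtinianRing (D i) ∧ IsLocalRing (D i) ∧ IsPrincipalIdealRing (D i)) := by
  constructor
  · intro h
    obtain ⟨n, p, hpinj, hprange⟩ := hfin.fin_param
    have hp : ∀ i, p i ∈ minimalPrimes R := fun i => hprange ▸ Set.mem_range_self i
    choose e he0 he hloc using fun i => h.exists_exponent (hp i)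
    let Q : Fin n → Ideal R := fun i => p i ^ e i
    have hcop : Pairwise (Function.onFun IsCoprime Q) := by
      intro i j hij
      refine IsCoprime.pow ?_
      rw [Ideal.isCoprime_iff_sup_eq]
      by_contra hne
      obtain ⟨m, hm, hle⟩ := Ideal.exists_le_maximal _ hne
      exact hij (hpinj (h.minimalPrime_unique (hp i) (hp j) hm
        (le_sup_left.trans hle) (le_sup_right.trans hle)))
    -- The annihilator of an element of `⋂ Q i` lies in no maximal ideal.
    have hinf : ⨅ i, Q i = ⊥ := by
      rw [eq_bot_iff]
      intro x hx
      rw [Submodule.mem_iInf] at hx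
      by_contra hx0
      obtain ⟨m, hm, hle⟩ := Ideal.exists_le_maximal ((⊥ : Ideal R).colon {x}) fun ht => hx0 <| by
        have h1 : (1 : R) ∈ (⊥ : Ideal R).colon {x} := ht ▸ Submodule.mem_top
        simpa using Submodule.mem_colon_singleton.mp h1
      obtain ⟨P, hP, hPm⟩ := Ideal.exists_minimalPrimes_le (I := (⊥ : Ideal R)) (J := m) bot_le
      obtain ⟨i, rfl⟩ : P ∈ Set.range p := hprange ▸ hP
      obtain ⟨s, hs, hsx⟩ := hloc i m hm hPm x (hx i)
      exact hs (hle (Submodule.mem_colon_singleton.mpr (by simpa using hsx)))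
    refine ⟨n, fun i => R ⧸ Q i, fun i => inferInstance, ⟨?_⟩, fun i => ?_⟩
    · exact (RingEquiv.quotientBot R).symm.trans ((Ideal.quotEquivOfEq hinf.symm).trans
        (Ideal.quotientInfRingEquivPiQuotient Q hcop))
    · rcases he i with hmax | h1
      · exact .inr (h.quotient_pow hmax (he0 i))
      · left
        have hQ : (Q i).IsPrime := by
          simpa only [Q, h1, pow_one] using (hp i).1.1
        exact (h.of_surjective (Ideal.Quotient.mk (Q i))
          Ideal.Quotient.mk_surjective).isDedekindDomain
  · rintro ⟨n, D, inst, ⟨f⟩, hD⟩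
    refine IsMultiplicationRing.of_surjective f.symm.toRingHom f.symm.surjective
      (isMultiplicationRing_pi fun i => ?_)
    rcases hD i with hi | ⟨-, -, hi⟩
    · exact isMultiplicationRing_of_isDedekindDomain (D i)
    · exact isMultiplicationRing_of_isPrincipalIdealRing (D i)
end

section
/- Let D : Fin n → CommRing be a finite family of commutative rings such that each D i is either a Dedekind domain or an Artinian, local, principal ideal ring, let R = ∏_{i} D i, let M i be a D i-module for each i, and regard M = ⊕_i M i as an R-module via coordinatewise action. Then M is a multiplication R-module if and only if for each i the D i-module M i is isomorphic to D i, or isomorphic to D i / I_i for some nonzero ideal I_i of D i, or (in the case where D i is a Dedekind domain) isomorphic to a nonzero ideal of D i. -/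
/-!
A multiplication module over a finite product `∏ D i` is a direct sum of multiplication modules
over the factors: the idempotents `Pi.single i 1` split every submodule, and ideals of the product
are products of ideals. So it suffices to treat one factor.

* If some product of maximal ideals kills a multiplication module `M`, then `M` is cyclic
  (`exists_span_eq_top`). By the Chinese remainder idea there is `x` lying outside `m • M` for each
  of these maximal ideals `m` with `m • M ≠ M`. Writing `R x = I • M`, each such `m` is comaximal
  with `I`, so in all cases `M = R x + m • M`, and iterating over the product gives `M = R x`.
  This covers modules over an Artinian local ring, where a power of the maximal ideal vanishes,
  and modules over a Dedekind domain with nonzero annihilator, which contains a product of nonzero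
  primes.
* A faithful multiplication module over a domain is torsion-free, since `a x = 0` and
  `R x = I • M` give `a I = 0`. If `R x = I • M` with `x ≠ 0` and `0 ≠ a ∈ I`, then multiplication
  by `a` embeds `M` in `R x ≅ R`, so `M` is isomorphic to a nonzero ideal.

Conversely cyclic modules are multiplication modules, and so are ideals of a Dedekind domain,
because there to contain is to divide.
-/


/-- An `R`-module `M` is a multiplication module if every submodule `N` of `M` is of the form
`N = IM` for some ideal `I` of `R`. -/
def IsMultiplicationModule (R : Type*) (M : Type*) [Semiring R] [AddCommMonoid M]
    [Module R M] : Prop :=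
  ∀ N : Submodule R M, ∃ I : Ideal R, N = I • (⊤ : Submodule R M)

namespace IsMultiplicationModule

section General

variable {R M N : Type*} [CommRing R] [AddCommGroup M] [Module R M] [AddCommGroup N] [Module R N]

theorem of_surjective (h : IsMultiplicationModule R M) (f : M →ₗ[R] N)
    (hf : Function.Surjective f) : IsMultiplicationModule R N := by
  intro P
  obtain ⟨I, hI⟩ := h (P.comap f)
  refine ⟨I, ?_⟩
  rw [← Submodule.map_comap_eq_of_surjective hf P, hI, Submodule.map_smul'', Submodule.map_top,
    LinearMap.range_eq_top.2 hf]

theorem self : IsMultiplicationModule R R := fun I => ⟨I, by simp⟩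

theorem ideal [IsDedekindDomain R] (A : Ideal R) : IsMultiplicationModule R A := by
  intro P
  have hle : P.map A.subtype ≤ A := by
    simpa using Submodule.map_subtype_le A P
  obtain ⟨I, hI⟩ := Ideal.dvd_iff_le.2 hle
  refine ⟨I, ?_⟩
  apply Submodule.map_injective_of_injective A.injective_subtype
  rw [Submodule.map_smul'', Submodule.map_top, Submodule.range_subtype, hI, smul_eq_mul, mul_comm]

/-- Restriction of scalars along a surjective ring homomorphism changes neither the submodules
nor the submodules of the form `I • ⊤`. -/
theorem iff_of_ringHom {S : Type*} [CommRing S] [Module S M] (f : R →+* S)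
    (hf : Function.Surjective f) (hsmul : ∀ (r : R) (m : M), r • m = f r • m) :
    IsMultiplicationModule R M ↔ IsMultiplicationModule S M := by
  constructor
  · intro h P
    obtain ⟨I, hI⟩ := h
      { P.toAddSubmonoid with smul_mem' := fun r m hm => by
                                rw [hsmul]; exact P.smul_mem _ hm }
    have hI' : ∀ m, m ∈ P ↔ m ∈ I • (⊤ : Submodule R M) := fun m => by rw [← hI]; rfl
    refine ⟨I.map f, le_antisymm (fun m hm => ?_) (Submodule.smul_le.2 fun s hs m _ => ?_)⟩
    · refine Submodule.smul_induction_on ((hI' m).1 hm) (fun r hr n _ => ?_)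
        fun x y hx hy => add_mem hx hy
      rw [hsmul]
      exact Submodule.smul_mem_smul (Ideal.mem_map_of_mem f hr) trivial
    · obtain ⟨r, hr, rfl⟩ := (Ideal.mem_map_iff_of_surjective f hf).1 hs
      rw [← hsmul]
      exact (hI' _).2 (Submodule.smul_mem_smul hr trivial)
  · intro h P
    obtain ⟨I, hI⟩ := h
      { P.toAddSubmonoid with smul_mem' := fun s m hm => by
                                obtain ⟨r, rfl⟩ := hf s
                                rw [← hsmul]; exact P.smul_mem _ hm }
    have hI' : ∀ m, m ∈ P ↔ m ∈ I • (⊤ : Submodule S M) := fun m => by rw [← hI]; rfl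
    refine ⟨I.comap f, le_antisymm (fun m hm => ?_) (Submodule.smul_le.2 fun r hr m _ => ?_)⟩
    · refine Submodule.smul_induction_on ((hI' m).1 hm) (fun s hs n _ => ?_)
        fun x y hx hy => add_mem hx hy
      obtain ⟨r, rfl⟩ := hf s
      rw [← hsmul]
      exact Submodule.smul_mem_smul hs trivial
    · rw [hI', hsmul]
      exact Submodule.smul_mem_smul hr trivial

/-- Given finitely many maximal ideals, some element avoids `m • M` for all those `m` at once
for which this is a proper submodule. -/
theorem exists_notMem_smul_top (S : Finset (Ideal R)) (hS : ∀ m ∈ S, m.IsMaximal) :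
    ∃ x : M, ∀ m ∈ S, m • (⊤ : Submodule R M) ≠ ⊤ → x ∉ m • (⊤ : Submodule R M) := by
  classical
  have hx : ∀ m : Ideal R, ∃ x : M,
      m • (⊤ : Submodule R M) ≠ ⊤ → x ∉ m • (⊤ : Submodule R M) := by
    intro m
    by_cases h : m • (⊤ : Submodule R M) = ⊤
    · exact ⟨0, fun h' => (h' h).elim⟩
    · obtain ⟨x, -, hx⟩ := SetLike.exists_of_lt (lt_top_iff_ne_top.2 h)
      exact ⟨x, fun _ => hx⟩
  choose x hx using hx
  -- `e m` lies in all the other maximal ideals of the family but not in `m`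
  have he : ∀ m : Ideal R, ∃ e : R, m ∈ S → e ∉ m ∧ ∀ m' ∈ S, m' ≠ m → e ∈ m' := by
    intro m
    by_cases hm : m ∈ S
    · have : ¬ (S.erase m).inf id ≤ m := by
        rw [(hS m hm).isPrime.inf_le']
        rintro ⟨m', hm', hle⟩
        rw [Finset.mem_erase] at hm'
        exact hm'.1 ((hS m' hm'.2).eq_of_le (hS m hm).ne_top hle)
      obtain ⟨e, he, hem⟩ := SetLike.not_le_iff_exists.1 this
      refine ⟨e, fun _ => ⟨hem, fun m' hm' hne => ?_⟩⟩
      exact (Finset.inf_le (f := id) (Finset.mem_erase.2 ⟨hne, hm'⟩) : _ ≤ m') he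
    · exact ⟨0, fun h => (hm h).elim⟩
  choose e he using he
  refine ⟨∑ m ∈ S, e m • x m, fun m hm hne hmem => hx m hne ?_⟩
  rw [← Finset.add_sum_erase S _ hm] at hmem
  have h1 : e m • x m ∈ m • (⊤ : Submodule R M) := by
    refine (Submodule.add_mem_iff_left _ (Submodule.sum_mem _ fun m' hm' => ?_)).1 hmem
    rw [Finset.mem_erase] at hm'
    exact Submodule.smul_mem_smul ((he m' hm'.2).2 m hm hm'.1.symm) trivial
  -- `e m` is invertible modulo `m`
  obtain ⟨b, hb⟩ := (hS m hm).exists_inv (he m hm).1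
  obtain ⟨c, hc, hbc⟩ := hb
  have h2 : x m = b • e m • x m + c • x m := by
    rw [smul_smul, ← add_smul, hbc, one_smul]
  rw [h2]
  exact add_mem (Submodule.smul_mem _ _ h1) (Submodule.smul_mem_smul hc trivial)

/-- A multiplication module killed by a product of maximal ideals is cyclic. A generator is any
element outside each proper submodule `m • M` for `m` in the product. -/
theorem exists_span_eq_top (h : IsMultiplicationModule R M) (Z : Multiset (Ideal R))
    (hZ : ∀ m ∈ Z, m.IsMaximal) (hprod : Z.prod • (⊤ : Submodule R M) = ⊥) :
    ∃ x : M, Submodule.span R {x} = ⊤ := by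
  classical
  obtain ⟨x, hx⟩ := exists_notMem_smul_top (M := M) Z.toFinset
    fun m hm => hZ m (Multiset.mem_toFinset.1 hm)
  refine ⟨x, ?_⟩
  obtain ⟨I, hI⟩ := h (Submodule.span R {x})
  have key : ∀ m ∈ Z, Submodule.span R {x} ⊔ m • (⊤ : Submodule R M) = ⊤ := by
    intro m hm
    by_cases ht : m • (⊤ : Submodule R M) = ⊤
    · rw [ht, sup_top_eq]
    · have hxm := hx m (Multiset.mem_toFinset.2 hm) ht
      have hIm : ¬ I ≤ m := fun hle => hxm <| by
        have : x ∈ I • (⊤ : Submodule R M) := hI ▸ Submodule.mem_span_singleton_self x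
        exact Submodule.smul_mono_left hle this
      have : I ⊔ m = ⊤ := (hZ m hm).out.2 _ (right_lt_sup.2 hIm)
      rw [hI, ← Submodule.sup_smul, this, Submodule.top_smul]
  have key2 : ∀ Y : Multiset (Ideal R), Y ≤ Z →
      Submodule.span R {x} ⊔ Y.prod • (⊤ : Submodule R M) = ⊤ := by
    intro Y
    induction Y using Multiset.induction_on with
    | empty => intro _; simp
    | cons m Y ih =>
      intro hle
      have hY := ih ((Multiset.le_cons_self Y m).trans hle)
      have hm := key m (Multiset.mem_of_le hle (Multiset.mem_cons_self m Y))
      rw [eq_top_iff]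
      calc (⊤ : Submodule R M)
          = Submodule.span R {x} ⊔ m • (Submodule.span R {x} ⊔ Y.prod • (⊤ : Submodule R M)) := by
            rw [hY, hm]
        _ ≤ _ := by
            rw [Submodule.smul_sup, ← sup_assoc, Multiset.prod_cons, ← smul_eq_mul, smul_assoc]
            exact sup_le_sup_right (sup_le le_rfl Submodule.smul_le_right) _
  simpa [hprod] using key2 Z le_rfl

theorem exists_equiv_quotient (h : IsMultiplicationModule R M) (Z : Multiset (Ideal R))
    (hZ : ∀ m ∈ Z, m.IsMaximal) (hprod : Z.prod • (⊤ : Submodule R M) = ⊥) :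
    Nonempty (M ≃ₗ[R] (R ⧸ Module.annihilator R M)) := by
  obtain ⟨x, hx⟩ := h.exists_span_eq_top Z hZ hprod
  have hsurj : Function.Surjective (LinearMap.toSpanSingleton R M x) := by
    rw [← LinearMap.range_eq_top, LinearMap.range_toSpanSingleton, hx]
  have hker : LinearMap.ker (LinearMap.toSpanSingleton R M x) = Module.annihilator R M := by
    ext r
    rw [LinearMap.mem_ker, LinearMap.toSpanSingleton_apply, Module.mem_annihilator]
    refine ⟨fun hr m => ?_, fun hr => hr x⟩
    obtain ⟨s, rfl⟩ := hsurj m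
    rw [LinearMap.toSpanSingleton_apply, smul_comm, hr, smul_zero]
  rw [← hker]
  exact ⟨((LinearMap.toSpanSingleton R M x).quotKerEquivOfSurjective hsurj).symm⟩

theorem exists_equiv_quotient_of_isArtinianRing [IsArtinianRing R] [IsLocalRing R]
    (h : IsMultiplicationModule R M) : Nonempty (M ≃ₗ[R] (R ⧸ Module.annihilator R M)) := by
  obtain ⟨k, hk⟩ := IsArtinianRing.isNilpotent_jacobson_bot (R := R)
  rw [IsLocalRing.jacobson_eq_maximalIdeal ⊥ bot_ne_top] at hk
  exact h.exists_equiv_quotient (Multiset.replicate k (IsLocalRing.maximalIdeal R))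
    (fun m hm => Multiset.eq_of_mem_replicate hm ▸ inferInstance)
    (by rw [Multiset.prod_replicate, hk]; exact Submodule.bot_smul _)

/-- A faithful multiplication module over a domain is torsion-free, and embeds in the ring by
comparing a multiple `a • m` with a fixed nonzero element `x`. -/
theorem exists_equiv_ideal [IsDomain R] (h : IsMultiplicationModule R M)
    (hann : Module.annihilator R M = ⊥) :
    ∃ I : Ideal R, I ≠ ⊥ ∧ Nonempty (M ≃ₗ[R] I) := by
  have hfaith : ∀ r : R, (∀ m : M, r • m = 0) → r = 0 := fun r hr => by
    have := Module.mem_annihilator.2 hr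
    rwa [hann] at this
  have htf : ∀ (a : R) (x : M), a • x = 0 → x ≠ 0 → a = 0 := by
    intro a x hax hx
    obtain ⟨I, hI⟩ := h (Submodule.span R {x})
    have hI0 : I ≠ ⊥ := by
      rintro rfl
      rw [Submodule.bot_smul, Submodule.span_singleton_eq_bot] at hI
      exact hx hI
    obtain ⟨b, hb, hb0⟩ := Submodule.exists_mem_ne_zero_of_ne_bot hI0
    refine (mul_eq_zero.1 (hfaith (a * b) fun m => ?_)).resolve_right hb0
    have hbm : b • m ∈ Submodule.span R {x} := hI ▸ Submodule.smul_mem_smul hb trivial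
    obtain ⟨c, hc⟩ := Submodule.mem_span_singleton.1 hbm
    rw [mul_smul, ← hc, smul_comm, hax, smul_zero]
  obtain ⟨x, hx⟩ : ∃ x : M, x ≠ 0 := by
    by_contra! hall
    exact one_ne_zero (hfaith 1 fun m => by rw [hall m, smul_zero])
  obtain ⟨I, hI⟩ := h (Submodule.span R {x})
  have hI0 : I ≠ ⊥ := by
    rintro rfl
    rw [Submodule.bot_smul, Submodule.span_singleton_eq_bot] at hI
    exact hx hI
  obtain ⟨a, ha, ha0⟩ := Submodule.exists_mem_ne_zero_of_ne_bot hI0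
  have hmem : ∀ m : M, ∃ c : R, c • x = a • m := fun m =>
    Submodule.mem_span_singleton.1 (hI ▸ Submodule.smul_mem_smul ha trivial)
  choose c hc using hmem
  have hinj : ∀ r s : R, r • x = s • x → r = s := fun r s hrs =>
    sub_eq_zero.1 (htf _ x (by rw [sub_smul, hrs, sub_self]) hx)
  -- `m ↦ c m` with `a m = (c m) x` is the embedding of `M` in `R`
  let f : M →ₗ[R] R :=
    { toFun := c
      map_add' := fun m n => hinj _ _ (by rw [add_smul, hc, hc, hc, smul_add])
      map_smul' := fun r m => hinj _ _ (by
        rw [RingHom.id_apply, smul_eq_mul, mul_smul, hc, hc, smul_comm]) }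
  have hf : Function.Injective f := by
    rw [injective_iff_map_eq_zero]
    intro m hm
    by_contra hm0
    have h0 : a • m = 0 := by
      rw [← hc m, show c m = 0 from hm, zero_smul]
    exact ha0 (htf a m h0 hm0)
  refine ⟨LinearMap.range f, fun hbot => hx ?_, ⟨LinearEquiv.ofInjective f hf⟩⟩
  rw [LinearMap.range_eq_bot] at hbot
  exact hf (by rw [hbot]; rfl)

end General

/-- The classification over a single factor. -/
theorem iff_equiv {R M : Type*} [CommRing R] [AddCommGroup M] [Module R M]
    (hR : IsDedekindDomain R ∨
      (IsArtinianRing R ∧ IsLocalRing R ∧ IsPrincipalIdealRing R)) :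
    IsMultiplicationModule R M ↔
      Nonempty (M ≃ₗ[R] R) ∨
        (∃ I : Ideal R, I ≠ ⊥ ∧ Nonempty (M ≃ₗ[R] (R ⧸ I))) ∨
        (IsDedekindDomain R ∧ ∃ I : Ideal R, I ≠ ⊥ ∧ Nonempty (M ≃ₗ[R] I)) := by
  constructor
  · intro h
    by_cases hann : Module.annihilator R M = ⊥
    · rcases hR with hR | ⟨_, _, _⟩
      · exact Or.inr (Or.inr ⟨hR, h.exists_equiv_ideal hann⟩)
      · obtain ⟨e⟩ := h.exists_equiv_quotient_of_isArtinianRing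
        exact Or.inl ⟨e.trans (Submodule.quotEquivOfEqBot _ hann)⟩
    · refine Or.inr (Or.inl ⟨_, hann, ?_⟩)
      rcases hR with _ | ⟨_, _, _⟩
      · refine h.exists_equiv_quotient
          (UniqueFactorizationMonoid.normalizedFactors (Module.annihilator R M))
          (fun m hm => ?_) ?_
        · have hp := UniqueFactorizationMonoid.prime_of_normalized_factor m hm
          exact (Ideal.isPrime_of_prime hp).isMaximal hp.ne_zero
        · rw [Ideal.prod_normalizedFactors_eq_self hann, eq_bot_iff]
          exact Submodule.smul_le.2 fun r hr m _ => by
            rw [Module.mem_annihilator.1 hr m]; exact zero_mem _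
      · exact h.exists_equiv_quotient_of_isArtinianRing
  · rintro (⟨⟨e⟩⟩ | ⟨I, -, ⟨e⟩⟩ | ⟨_, I, -, ⟨e⟩⟩)
    · exact self.of_surjective e.symm.toLinearMap e.symm.surjective
    · exact (self.of_surjective I.mkQ I.mkQ_surjective).of_surjective e.symm.toLinearMap
        e.symm.surjective
    · exact (ideal I).of_surjective e.symm.toLinearMap e.symm.surjective

open DirectSum in
theorem directSum_iff {ι : Type*} [Finite ι] (D : ι → Type*) [∀ i, CommRing (D i)]
    (M : ι → Type*) [∀ i, AddCommGroup (M i)] [∀ i, Module (D i) (M i)]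
    [∀ i, Module (∀ j, D j) (M i)]
    (hsmul : ∀ i (r : ∀ j, D j) (m : M i), r • m = r i • m) :
    IsMultiplicationModule (∀ j, D j) (⨁ i, M i) ↔ ∀ i, IsMultiplicationModule (D i) (M i) := by
  classical
  cases nonempty_fintype ι
  constructor
  · intro h i
    rw [← iff_of_ringHom (Pi.evalRingHom D i) (Function.surjective_eval i) (hsmul i)]
    refine h.of_surjective (DirectSum.component (∀ j, D j) ι M i) fun m =>
      ⟨DirectSum.lof (∀ j, D j) ι M i m, ?_⟩
    exact DirectSum.component.lof_self ..
  · intro h N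
    -- `N` is the direct sum of its projections, cut out by the idempotents of the product
    have hN : ∀ x : ⨁ i, M i, x ∈ N ↔
        ∀ i, x i ∈ N.map (DirectSum.component (∀ j, D j) ι M i) := by
      intro x
      refine ⟨fun hx i => ⟨x, hx, rfl⟩, fun hx => ?_⟩
      rw [← DirectSum.sum_univ_of x]
      refine Submodule.sum_mem _ fun i _ => ?_
      obtain ⟨y, hy, hyx⟩ := hx i
      have : DirectSum.of M i (x i) = (Pi.single i 1 : ∀ j, D j) • y := by
        ext j
        rw [DirectSum.smul_apply, hsmul]
        by_cases hij : i = j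
        · subst hij
          rw [DirectSum.of_eq_same, Pi.single_eq_same, one_smul]
          exact hyx.symm
        · rw [DirectSum.of_eq_of_ne _ _ _ (Ne.symm hij), Pi.single_eq_of_ne (Ne.symm hij), zero_smul]
      rw [this]
      exact N.smul_mem _ hy
    have h' : ∀ i, IsMultiplicationModule (∀ j, D j) (M i) := fun i =>
      (iff_of_ringHom (Pi.evalRingHom D i) (Function.surjective_eval i) (hsmul i)).2 (h i)
    choose I hI using fun i => h' i (N.map (DirectSum.component (∀ j, D j) ι M i))
    let J : Ideal (∀ j, D j) := Ideal.pi fun i => (I i).map (Pi.evalRingHom D i)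
    refine ⟨J, le_antisymm (fun x hx => ?_) (Submodule.smul_le.2 fun r hr x _ => ?_)⟩
    · rw [← DirectSum.sum_univ_of x]
      refine Submodule.sum_mem _ fun i _ => ?_
      have hxi := (hN x).1 hx i
      rw [hI i] at hxi
      have hle : I i • (⊤ : Submodule (∀ j, D j) (M i)) ≤
          (J • ⊤ : Submodule (∀ j, D j) (⨁ i, M i)).comap (DirectSum.lof (∀ j, D j) ι M i) := by
        refine Submodule.smul_le.2 fun r hr m _ => ?_
        have hrm : r • m = (Pi.single i (r i) : ∀ j, D j) • m := by
          rw [hsmul, hsmul, Pi.single_eq_same]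
        rw [hrm, Submodule.mem_comap, map_smul]
        refine Submodule.smul_mem_smul (fun j => ?_) trivial
        by_cases hij : i = j
        · subst hij
          rw [Pi.single_eq_same]
          exact Ideal.mem_map_of_mem (Pi.evalRingHom D i) hr
        · rw [Pi.single_eq_of_ne (Ne.symm hij)]
          exact zero_mem _
      exact hle hxi
    · rw [hN]
      intro i
      obtain ⟨s, hs, hsr⟩ := (Ideal.mem_map_iff_of_surjective (Pi.evalRingHom D i)
        (Function.surjective_eval i)).1 (hr i)
      have : (r • x) i = s • x i := by
        rw [DirectSum.smul_apply, hsmul, hsmul, ← hsr]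
        rfl
      rw [this, hI i]
      exact Submodule.smul_mem_smul hs trivial

end IsMultiplicationModule

open DirectSum in
/-- Let `D : Fin n → CommRing` be a finite family of commutative rings such that each `D i` is
either a Dedekind domain or an Artinian, local, principal ideal ring, let `R = ∏_i D i`, let
`M i` be a `D i`-module for each `i`, and regard `M = ⊕_i M i` as an `R`-module via coordinatewise
action. Then `M` is a multiplication `R`-module iff for each `i` the `D i`-module `M i` is
isomorphic to `D i`, or isomorphic to `D i / I_i` for some nonzero ideal `I_i` of `D i`, or
(in the case where `D i` is a Dedekind domain) isomorphic to a nonzero ideal of `D i`. -/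
theorem isMultiplicationModule_directSum_iff
    {n : ℕ} (D : Fin n → Type u) [∀ i, CommRing (D i)]
    (hD : ∀ i, IsDedekindDomain (D i) ∨
      (IsArtinianRing (D i) ∧ IsLocalRing (D i) ∧ IsPrincipalIdealRing (D i)))
    (M : Fin n → Type v) [∀ i, AddCommGroup (M i)] [∀ i, Module (D i) (M i)] :
    letI : ∀ i, Module ((j : Fin n) → D j) (M i) :=
      fun i => Module.compHom (M i) (Pi.evalRingHom D i)
    (IsMultiplicationModule ((j : Fin n) → D j) (⨁ i, M i) ↔
      ∀ i, Nonempty (M i ≃ₗ[D i] D i) ∨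
        (∃ I : Ideal (D i), I ≠ ⊥ ∧ Nonempty (M i ≃ₗ[D i] (D i ⧸ I))) ∨
        (IsDedekindDomain (D i) ∧
          ∃ I : Ideal (D i), I ≠ ⊥ ∧ Nonempty (M i ≃ₗ[D i] I))) := by
  let _ : ∀ i, Module ((j : Fin n) → D j) (M i) :=
    fun i => Module.compHom (M i) (Pi.evalRingHom D i)
  exact (IsMultiplicationModule.directSum_iff D M fun _ _ _ => rfl).trans
    (forall_congr' fun i => IsMultiplicationModule.iff_equiv (hD i))
end

section
/- Let D : Fin n → CommRing be a finite family of commutative rings such that each D i is either a Dedekind domain or an Artinian, local, principal ideal ring, let R = ∏_{i} D i, let M i be a D i-module for each i, and regard M = ⊕_i M i as an R-module via coordinatewise action. Then M is a faithful multiplication R-module if and only if for each i, either the D i-module M i is isomorphic to D i, or D i is a Dedekind domain and M i is isomorphic to a nonzero ideal of D i. -/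
/-! ### Multiplication modules over a single ring -/

section OneRing

variable {R : Type*} [CommRing R] {M M' : Type*} [AddCommGroup M] [Module R M]
  [AddCommGroup M'] [Module R M']

lemma IsMultiplicationModule.of_equiv (e : M ≃ₗ[R] M') (h : IsMultiplicationModule R M') :
    IsMultiplicationModule R M := by
  intro N
  obtain ⟨I, hI⟩ := h (N.map e.toLinearMap)
  refine ⟨I, Submodule.map_injective_of_injective (f := e.toLinearMap) e.injective ?_⟩
  rw [hI, Submodule.map_smul'', Submodule.map_top, LinearEquiv.range]

lemma isMultiplicationModule_self : IsMultiplicationModule R R := fun N =>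
  ⟨N, by simp⟩

lemma isMultiplicationModule_ideal [IsDedekindDomain R] (J : Ideal R) :
    IsMultiplicationModule R J := by
  intro N
  have hle : N.map J.subtype ≤ J := Submodule.map_subtype_le J N
  obtain ⟨I, hI⟩ := Ideal.dvd_iff_le.mpr hle
  refine ⟨I, Submodule.map_injective_of_injective J.subtype_injective ?_⟩
  rw [Submodule.map_smul'', Submodule.map_top, Submodule.range_subtype, hI, smul_eq_mul, mul_comm]

lemma annihilator_ideal_eq_bot [IsDomain R] {J : Ideal R} (hJ : J ≠ ⊥) :
    Module.annihilator R J = ⊥ := by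
  obtain ⟨a, ha, ha0⟩ := Submodule.exists_mem_ne_zero_of_ne_bot hJ
  rw [eq_bot_iff]
  intro r hr
  have h := congrArg Subtype.val (Module.mem_annihilator.mp hr ⟨a, ha⟩)
  exact (mul_eq_zero.mp h).resolve_right ha0

lemma nontrivial_of_annihilator_eq_bot [Nontrivial R] (hf : Module.annihilator R M = ⊥) :
    Nontrivial M := by
  by_contra h
  rw [not_nontrivial_iff_subsingleton] at h
  have h1 : (1 : R) ∈ Module.annihilator R M :=
    Module.mem_annihilator.mpr fun m => Subsingleton.elim _ _
  rw [hf] at h1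
  exact one_ne_zero h1

/-- Over a domain, the ideal is the image of the coefficient map `x ↦ r`, where `a • x = r • m`
for a fixed `m ≠ 0` and a fixed nonzero `a` with `a M ⊆ R m`. -/
lemma exists_equiv_ideal_of_isDomain [IsDomain R] (hf : Module.annihilator R M = ⊥)
    (hm : IsMultiplicationModule R M) :
    ∃ I : Ideal R, I ≠ ⊥ ∧ Nonempty (M ≃ₗ[R] I) := by
  have := nontrivial_of_annihilator_eq_bot hf
  have key : ∀ m : M, m ≠ 0 → ∃ a : R, a ≠ 0 ∧ ∀ x : M, ∃ r : R, r • m = a • x := by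
    intro m hm0
    obtain ⟨I, hI⟩ := hm (Submodule.span R {m})
    have hI0 : I ≠ ⊥ := by
      rintro rfl
      rw [Submodule.bot_smul, Submodule.span_singleton_eq_bot] at hI
      exact hm0 hI
    obtain ⟨a, ha, ha0⟩ := Submodule.exists_mem_ne_zero_of_ne_bot hI0
    refine ⟨a, ha0, fun x => Submodule.mem_span_singleton.mp ?_⟩
    rw [hI]
    exact Submodule.smul_mem_smul ha trivial
  have tf : ∀ (r : R) (m : M), r • m = 0 → m ≠ 0 → r = 0 := by
    intro r m hr hm0
    obtain ⟨a, ha0, ha⟩ := key m hm0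
    have : r * a ∈ Module.annihilator R M := by
      rw [Module.mem_annihilator]
      intro x
      obtain ⟨s, hs⟩ := ha x
      rw [mul_smul, ← hs, smul_comm, hr, smul_zero]
    rw [hf] at this
    exact (mul_eq_zero.mp this).resolve_right ha0
  obtain ⟨m, hm0⟩ := exists_ne (0 : M)
  obtain ⟨a, ha0, ha⟩ := key m hm0
  choose c hc using ha
  have cancel : ∀ r s : R, r • m = s • m → r = s := fun r s h =>
    sub_eq_zero.mp (tf _ m (by rw [sub_smul, h, sub_self]) hm0)
  let f : M →ₗ[R] R :=
    { toFun := c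
      map_add' := fun x y => cancel _ _ (by rw [hc, add_smul, hc, hc, smul_add])
      map_smul' := fun r x => cancel _ _ (by
        rw [hc, RingHom.id_apply, smul_eq_mul, mul_smul, hc, smul_comm]) }
  have hfi : Function.Injective f := by
    rw [injective_iff_map_eq_zero]
    intro x hx
    by_contra hx0
    have h : c x = 0 := hx
    exact ha0 (tf a x (by rw [← hc, h, zero_smul]) hx0)
  refine ⟨LinearMap.range f, ?_, ⟨LinearEquiv.ofInjective f hfi⟩⟩
  intro h
  exact hm0 (hfi (by rw [LinearMap.range_eq_bot.mp h]; simp))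

lemma nonempty_equiv_of_isArtinian_isLocal [IsArtinianRing R] [IsLocalRing R]
    (hf : Module.annihilator R M = ⊥) (hm : IsMultiplicationModule R M) :
    Nonempty (M ≃ₗ[R] R) := by
  have := nontrivial_of_annihilator_eq_bot hf
  set P := IsLocalRing.maximalIdeal R
  have hP : P • (⊤ : Submodule R M) ≠ ⊤ := by
    intro h
    obtain ⟨k, hk⟩ := IsArtinianRing.isNilpotent_jacobson_bot (R := R)
    rw [IsLocalRing.jacobson_eq_maximalIdeal ⊥ bot_ne_top] at hk
    have hpow : ∀ k : ℕ, P ^ k • (⊤ : Submodule R M) = ⊤ := by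
      intro k
      induction k with
      | zero => simp
      | succ k ih => rw [pow_succ, Submodule.mul_smul, h, ih]
    have h0 := hpow k
    rw [hk, Ideal.zero_eq_bot, Submodule.bot_smul] at h0
    exact bot_ne_top h0
  obtain ⟨x, -, hx⟩ := SetLike.exists_of_lt (lt_top_iff_ne_top.mpr hP)
  obtain ⟨I, hI⟩ := hm (Submodule.span R {x})
  have hIt : I = ⊤ := by
    by_contra hne
    apply hx
    have : x ∈ I • (⊤ : Submodule R M) := hI ▸ Submodule.mem_span_singleton_self x
    exact Submodule.smul_mono_left (IsLocalRing.le_maximalIdeal hne) this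
  rw [hIt, Submodule.top_smul] at hI
  have hsurj : ∀ y : M, ∃ r : R, r • x = y := fun y =>
    Submodule.mem_span_singleton.mp (hI ▸ trivial)
  refine ⟨(LinearEquiv.ofBijective (LinearMap.toSpanSingleton R M x) ⟨?_, ?_⟩).symm⟩
  · rw [injective_iff_map_eq_zero]
    intro r hr
    rw [LinearMap.toSpanSingleton_apply] at hr
    have : r ∈ Module.annihilator R M := by
      rw [Module.mem_annihilator]
      intro y
      obtain ⟨s, rfl⟩ := hsurj y
      rw [smul_comm, hr, smul_zero]
    rwa [hf] at this
  · intro y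
    simpa using hsurj y

lemma faithful_multiplication_iff
    (hR : IsDedekindDomain R ∨ (IsArtinianRing R ∧ IsLocalRing R ∧ IsPrincipalIdealRing R)) :
    (Module.annihilator R M = ⊥ ∧ IsMultiplicationModule R M) ↔
      (Nonempty (M ≃ₗ[R] R) ∨
        (IsDedekindDomain R ∧ ∃ I : Ideal R, I ≠ ⊥ ∧ Nonempty (M ≃ₗ[R] I))) := by
  constructor
  · rintro ⟨hf, hm⟩
    rcases hR with h | ⟨h1, h2, -⟩
    · exact Or.inr ⟨h, exists_equiv_ideal_of_isDomain hf hm⟩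
    · exact Or.inl (nonempty_equiv_of_isArtinian_isLocal hf hm)
  · rintro (⟨⟨e⟩⟩ | ⟨h, I, hI, ⟨e⟩⟩)
    · refine ⟨?_, isMultiplicationModule_self.of_equiv e⟩
      rw [e.annihilator_eq, eq_bot_iff]
      intro r hr
      simpa using Module.mem_annihilator.mp hr 1
    · refine ⟨?_, (isMultiplicationModule_ideal I).of_equiv e⟩
      rw [e.annihilator_eq, annihilator_ideal_eq_bot hI]

end OneRing

/-! ### Direct sums over a finite product of rings -/

section Product

open DirectSum

variable {ι : Type*} [DecidableEq ι] {D : ι → Type*} [∀ i, CommRing (D i)]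
  {M : ι → Type*} [∀ i, AddCommGroup (M i)] [∀ i, Module (D i) (M i)]
  [∀ i, Module ((j : ι) → D j) (M i)]

lemma single_smul_eq_of (hs : ∀ i (r : (j : ι) → D j) (m : M i), r • m = r i • m)
    (i : ι) (a : D i) (x : ⨁ i, M i) :
    (Pi.single i a : (j : ι) → D j) • x = DirectSum.of M i (a • x i) := by
  ext j
  rw [DirectSum.smul_apply, hs]
  rcases eq_or_ne i j with rfl | hij
  · rw [Pi.single_eq_same, DirectSum.of_eq_same]
  · rw [Pi.single_eq_of_ne hij.symm, zero_smul, DirectSum.of_eq_of_ne _ _ _ hij.symm]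

lemma directSum_faithful_iff (hs : ∀ i (r : (j : ι) → D j) (m : M i), r • m = r i • m) :
    Module.annihilator ((j : ι) → D j) (⨁ i, M i) = ⊥ ↔
      ∀ i, Module.annihilator (D i) (M i) = ⊥ := by
  constructor
  · intro h i
    rw [eq_bot_iff]
    intro a ha
    have : (Pi.single i a : (j : ι) → D j) ∈ Module.annihilator _ (⨁ i, M i) := by
      rw [Module.mem_annihilator]
      intro x
      rw [single_smul_eq_of hs, Module.mem_annihilator.mp ha, map_zero]
    rw [h] at this
    simpa using this
  · intro h
    rw [eq_bot_iff]
    intro r hr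
    have : ∀ i, r i = 0 := by
      intro i
      have : r i ∈ Module.annihilator (D i) (M i) := by
        rw [Module.mem_annihilator]
        intro m
        have := DFunLike.congr_fun (Module.mem_annihilator.mp hr (DirectSum.of M i m)) i
        rwa [DirectSum.smul_apply, hs, DirectSum.of_eq_same] at this
      rwa [h i] at this
    exact funext this

lemma directSum_isMultiplicationModule_iff [Fintype ι]
    (hs : ∀ i (r : (j : ι) → D j) (m : M i), r • m = r i • m) :
    IsMultiplicationModule ((j : ι) → D j) (⨁ i, M i) ↔
      ∀ i, IsMultiplicationModule (D i) (M i) := by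
  constructor
  · intro h i N
    let N' : Submodule ((j : ι) → D j) (⨁ i, M i) :=
      { carrier := {x | x i ∈ N}
        add_mem' := fun {x y} hx hy => by
          simpa using N.add_mem hx hy
        zero_mem' := by simp
        smul_mem' := fun r x hx => by
          simpa [DirectSum.smul_apply, hs] using N.smul_mem (r i) hx }
    obtain ⟨I, hI⟩ := h N'
    have hsurj : Function.Surjective (Pi.evalRingHom D i) := Function.surjective_eval i
    refine ⟨I.map (Pi.evalRingHom D i), le_antisymm ?_ ?_⟩
    · intro m hm
      have hmem : DirectSum.of M i m ∈ N' := by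
        change (DirectSum.of M i m) i ∈ N
        rwa [DirectSum.of_eq_same]
      rw [hI] at hmem
      have key : ∀ y ∈ I • (⊤ : Submodule ((j : ι) → D j) (⨁ i, M i)),
          y i ∈ I.map (Pi.evalRingHom D i) • (⊤ : Submodule (D i) (M i)) := by
        intro y hy
        induction hy using Submodule.smul_induction_on' with
        | smul r hr x hx =>
          rw [DirectSum.smul_apply, hs]
          exact Submodule.smul_mem_smul (Ideal.mem_map_of_mem (Pi.evalRingHom D i) hr) trivial
        | add x hx y hy h1 h2 => exact Submodule.add_mem _ h1 h2
      simpa using key _ hmem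
    · rw [Submodule.smul_le]
      intro a ha m _
      obtain ⟨r, hr, rfl⟩ := (Ideal.mem_map_iff_of_surjective _ hsurj).mp ha
      have hmem : r • DirectSum.of M i m ∈ N' := by
        rw [hI]
        exact Submodule.smul_mem_smul hr trivial
      have hmem' : (r • DirectSum.of M i m) i ∈ N := hmem
      rwa [DirectSum.smul_apply, hs, DirectSum.of_eq_same] at hmem'
  · intro h N
    -- Since `e_i N ⊆ N`, this preimage of `N` under `of M i` is also the projection of `N` to `M i`.
    let C : (i : ι) → Submodule (D i) (M i) := fun i =>
      { carrier := {m | DirectSum.of M i m ∈ N}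
        add_mem' := fun {x y} hx hy => by
          simpa using N.add_mem hx hy
        zero_mem' := by simp
        smul_mem' := fun a m hm => by
          have := N.smul_mem (Pi.single i a) hm
          rwa [single_smul_eq_of hs, DirectSum.of_eq_same] at this }
    choose I hI using fun i => h i (C i)
    have hsum : ∀ x : ⨁ i, M i, x = ∑ i, DirectSum.of M i (x i) := fun x =>
      (DirectSum.sum_univ_of x).symm
    refine ⟨Ideal.pi I, le_antisymm ?_ ?_⟩
    · intro x hx
      rw [hsum x]
      refine Submodule.sum_mem _ fun i _ => ?_
      have hxi : x i ∈ C i := by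
        have := N.smul_mem (Pi.single i 1) hx
        rwa [single_smul_eq_of hs, one_smul] at this
      rw [hI i] at hxi
      have key : ∀ y ∈ I i • (⊤ : Submodule (D i) (M i)), DirectSum.of M i y ∈
          Ideal.pi I • (⊤ : Submodule ((j : ι) → D j) (⨁ i, M i)) := by
        intro y hy
        induction hy using Submodule.smul_induction_on' with
        | smul a ha m hm =>
          have := single_smul_eq_of hs i a (DirectSum.of M i m)
          rw [DirectSum.of_eq_same] at this
          rw [← this]
          refine Submodule.smul_mem_smul ?_ trivial
          rw [Ideal.mem_pi]
          intro j
          rcases eq_or_ne j i with rfl | hij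
          · rwa [Pi.single_eq_same]
          · rw [Pi.single_eq_of_ne hij]
            exact zero_mem _
        | add x hx y hy h1 h2 =>
          rw [map_add]
          exact Submodule.add_mem _ h1 h2
      exact key _ hxi
    · rw [Submodule.smul_le]
      intro r hr x _
      rw [hsum (r • x)]
      refine Submodule.sum_mem _ fun i _ => ?_
      change (r • x) i ∈ C i
      rw [DirectSum.smul_apply, hs, hI i]
      exact Submodule.smul_mem_smul ((Ideal.mem_pi _ _).mp hr i) trivial

end Product

open DirectSum in
/-- Let `D : Fin n → CommRing` be a finite family of commutative rings such that each `D i` is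
either a Dedekind domain or an Artinian, local, principal ideal ring, let `R = ∏_i D i`, let
`M i` be a `D i`-module for each `i`, and regard `M = ⊕_i M i` as an `R`-module via coordinatewise
action. Then `M` is a faithful multiplication `R`-module iff for each `i`, either the `D i`-module
`M i` is isomorphic to `D i`, or `D i` is a Dedekind domain and `M i` is isomorphic to a nonzero
ideal of `D i`. -/
theorem isFaithfulMultiplicationModule_directSum_iff
    {n : ℕ} (D : Fin n → Type u) [∀ i, CommRing (D i)]
    (hD : ∀ i, IsDedekindDomain (D i) ∨
      (IsArtinianRing (D i) ∧ IsLocalRing (D i) ∧ IsPrincipalIdealRing (D i)))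
    (M : Fin n → Type v) [∀ i, AddCommGroup (M i)] [∀ i, Module (D i) (M i)] :
    letI : ∀ i, Module ((j : Fin n) → D j) (M i) :=
      fun i => Module.compHom (M i) (Pi.evalRingHom D i)
    ((Module.annihilator ((j : Fin n) → D j) (⨁ i, M i) = ⊥ ∧
        IsMultiplicationModule ((j : Fin n) → D j) (⨁ i, M i)) ↔
      ∀ i, Nonempty (M i ≃ₗ[D i] D i) ∨
        (IsDedekindDomain (D i) ∧
          ∃ I : Ideal (D i), I ≠ ⊥ ∧ Nonempty (M i ≃ₗ[D i] I))) := by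
  letI : ∀ i, Module ((j : Fin n) → D j) (M i) :=
    fun i => Module.compHom (M i) (Pi.evalRingHom D i)
  have hs : ∀ i (r : (j : Fin n) → D j) (m : M i), r • m = r i • m := fun _ _ _ => rfl
  rw [directSum_faithful_iff hs, directSum_isMultiplicationModule_iff hs, ← forall_and]
  exact forall_congr' fun i => faithful_multiplication_iff (hD i)
end

section
/- A commutative ring R is a multiplication ring with only finitely many minimal prime ideals if and only if there exists a faithful, Noetherian, distributive R-module. -/
/-- An `R`-module `M` is distributive if its lattice of submodules is distributive, i.e.
`(M₁ + M₂) ∩ N = (M₁ ∩ N) + (M₂ ∩ N)` for all submodules `M₁`, `M₂`, `N` of `M`. -/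
def IsDistributiveModule (R : Type*) (M : Type*) [Semiring R] [AddCommMonoid M]
    [Module R M] : Prop :=
  ∀ M₁ M₂ N : Submodule R M, (M₁ ⊔ M₂) ⊓ N = (M₁ ⊓ N) ⊔ (M₂ ⊓ N)

/-- Locally at every maximal ideal, the submodules generated by `x` and `y` are comparable,
expressed through the partition of unity `s + (1 - s) = 1`. -/
def Comparable (R : Type*) {M : Type*} [CommRing R] [AddCommGroup M] [Module R M]
    (x y : M) : Prop :=
  ∃ s c d : R, s • x = c • y ∧ (1 - s) • y = d • x

theorem IsDistributiveModule.comparable {R M : Type*} [CommRing R] [AddCommGroup M] [Module R M]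
    (h : IsDistributiveModule R M) (x y : M) : Comparable R x y := by
  have hxy : x + y ∈ (Submodule.span R {x} ⊔ Submodule.span R {y}) ⊓ Submodule.span R {x + y} :=
    ⟨Submodule.add_mem_sup (Submodule.mem_span_singleton_self x)
      (Submodule.mem_span_singleton_self y), Submodule.mem_span_singleton_self _⟩
  rw [h] at hxy
  obtain ⟨a, ⟨hax, ha⟩, b, ⟨hby, hb⟩, hab⟩ := Submodule.mem_sup.1 hxy
  obtain ⟨u, rfl⟩ := Submodule.mem_span_singleton.1 ha
  obtain ⟨v, rfl⟩ := Submodule.mem_span_singleton.1 hb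
  obtain ⟨e, he⟩ := Submodule.mem_span_singleton.1 hax
  obtain ⟨f, hf⟩ := Submodule.mem_span_singleton.1 hby
  refine ⟨1 - u, f - 1 + u, e - u, ?_, ?_⟩
  · linear_combination (norm := module) -hab - hf
  · linear_combination (norm := module) -he

theorem isDistributiveModule_of_comparable {R : Type*} [CommRing R]
    (h : ∀ x y : R, Comparable R x y) : IsDistributiveModule R R := by
  intro A B N
  refine le_antisymm ?_ (sup_le (inf_le_inf_right _ le_sup_left) (inf_le_inf_right _ le_sup_right))
  rintro n ⟨hn, hN⟩
  obtain ⟨a, ha, b, hb, rfl⟩ := Submodule.mem_sup.1 hn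
  obtain ⟨s, c, d, h1, h2⟩ := h a b
  refine Submodule.mem_sup.2 ⟨(1 - s) • (a + b), ⟨?_, N.smul_mem _ hN⟩,
    s • (a + b), ⟨?_, N.smul_mem _ hN⟩, by module⟩
  · rw [smul_add, h2]
    exact A.add_mem (A.smul_mem _ ha) (A.smul_mem _ ha)
  · rw [smul_add, h1]
    exact B.add_mem (B.smul_mem _ hb) (B.smul_mem _ hb)

/-- A finitely generated submodule is locally cyclic at `m` if all elements of the ambient module
are comparable. -/
theorem exists_smul_eq_smul_of_fg {R M : Type*} [CommRing R] [AddCommGroup M] [Module R M]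
    (h : ∀ x y : M, Comparable R x y) (m : Ideal R) [m.IsPrime] (N : Submodule R M) (hN : N.FG) :
    ∃ s ∉ m, ∃ x ∈ N, ∀ y ∈ N, ∃ c : R, s • y = c • x := by
  induction N, hN using Submodule.fg_induction with
  | singleton x =>
    refine ⟨1, m.one_notMem, x, Submodule.mem_span_singleton_self x, fun y hy => ?_⟩
    obtain ⟨c, rfl⟩ := Submodule.mem_span_singleton.1 hy
    exact ⟨c, one_smul _ _⟩
  | sup A B _ _ hA hB =>
    obtain ⟨s, hs, x, hx, hA⟩ := hA
    obtain ⟨t, ht, y, hy, hB⟩ := hB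
    obtain ⟨r, e, f, h1, h2⟩ := h x y
    by_cases hr : r ∈ m
    · have hr' : 1 - r ∉ m := fun hr' => m.one_notMem (by simpa using m.add_mem hr' hr)
      refine ⟨s * t * (1 - r), Ideal.IsPrime.mul_notMem ‹_› (Ideal.IsPrime.mul_notMem ‹_› hs ht) hr',
        x, (le_sup_left : A ≤ A ⊔ B) hx, fun z hz => ?_⟩
      obtain ⟨a, ha, b, hb, rfl⟩ := Submodule.mem_sup.1 hz
      obtain ⟨c, hc⟩ := hA a ha
      obtain ⟨d, hd⟩ := hB b hb
      refine ⟨t * (1 - r) * c + s * d * f, ?_⟩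
      linear_combination (norm := module) (t * (1 - r)) • hc + (s * (1 - r)) • hd + (s * d) • h2
    · refine ⟨s * t * r, Ideal.IsPrime.mul_notMem ‹_› (Ideal.IsPrime.mul_notMem ‹_› hs ht) hr,
        y, (le_sup_right : B ≤ A ⊔ B) hy, fun z hz => ?_⟩
      obtain ⟨a, ha, b, hb, rfl⟩ := Submodule.mem_sup.1 hz
      obtain ⟨c, hc⟩ := hA a ha
      obtain ⟨d, hd⟩ := hB b hb
      refine ⟨t * c * e + s * r * d, ?_⟩
      linear_combination (norm := module) (t * r) • hc + (s * r) • hd + (t * c) • h1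

theorem isNoetherianRing_of_faithful {R M : Type*} [CommRing R] [AddCommGroup M] [Module R M]
    (hann : Module.annihilator R M = ⊥) [IsNoetherian R M] : IsNoetherianRing R := by
  obtain ⟨S, hS⟩ := IsNoetherian.noetherian (⊤ : Submodule R M)
  let f : R →ₗ[R] (S → M) := LinearMap.pi fun x => LinearMap.toSpanSingleton R M x
  refine isNoetherian_of_injective f ((injective_iff_map_eq_zero f).2 fun r hr => ?_)
  rw [← Submodule.mem_bot R, ← hann, Module.mem_annihilator]
  intro y
  have hy : y ∈ Submodule.span R (S : Set M) := hS ▸ Submodule.mem_top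
  induction hy using Submodule.span_induction with
  | mem x hx => exact congrFun hr ⟨x, hx⟩
  | zero => exact smul_zero r
  | add x y _ _ hx hy => rw [smul_add, hx, hy, add_zero]
  | smul a x _ hx => rw [smul_comm, hx, smul_zero]

/-- Locally `M` is generated by a single element `x`, and faithfulness makes `a ↦ a • x` locally
injective, so comparability of `a • x` and `b • x` descends to `a` and `b`. -/
theorem comparable_of_faithful {R M : Type*} [CommRing R] [AddCommGroup M] [Module R M]
    (hann : Module.annihilator R M = ⊥) [IsNoetherian R M]
    (h : ∀ x y : M, Comparable R x y) (a b : R) : Comparable R a b := by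
  -- `A` and `B` are the colon ideals `((b) : a)` and `((a) : b)`.
  let A : Ideal R := Submodule.comap (LinearMap.mulRight R a) (Ideal.span {b})
  let B : Ideal R := Submodule.comap (LinearMap.mulRight R b) (Ideal.span {a})
  have hA (s : R) : s ∈ A ↔ ∃ c, c * b = s * a := Ideal.mem_span_singleton'
  have hB (s : R) : s ∈ B ↔ ∃ c, c * a = s * b := Ideal.mem_span_singleton'
  have key : A ⊔ B = ⊤ := by
    by_contra hne
    obtain ⟨m, hm, hle⟩ := Ideal.exists_le_maximal _ hne
    have := hm.isPrime
    obtain ⟨s, hs, x, -, hx⟩ := exists_smul_eq_smul_of_fg h m ⊤ (IsNoetherian.noetherian _)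
    have hs0 (r : R) (hr : r • x = 0) : s * r = 0 := by
      rw [← Submodule.mem_bot R, ← hann, Module.mem_annihilator]
      intro y
      obtain ⟨c, hc⟩ := hx y trivial
      rw [mul_comm, mul_smul, hc, smul_comm, hr, smul_zero]
    obtain ⟨t, c, d, h1, h2⟩ := h (a • x) (b • x)
    by_cases ht : t ∈ m
    · have ht' : 1 - t ∉ m := fun ht' => this.one_notMem (by simpa using m.add_mem ht' ht)
      refine this.mul_notMem hs ht' (hle (Ideal.mem_sup_right ((hB _).2 ⟨s * d, ?_⟩)))
      have := hs0 ((1 - t) * b - d * a) (by rw [sub_smul, mul_smul, mul_smul, h2, sub_self])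
      linear_combination -this
    · refine this.mul_notMem hs ht (hle (Ideal.mem_sup_left ((hA _).2 ⟨s * c, ?_⟩)))
      have := hs0 (t * a - c * b) (by rw [sub_smul, mul_smul, mul_smul, h1, sub_self])
      linear_combination -this
  obtain ⟨s, hs, t, ht, hst⟩ := Submodule.mem_sup.1 ((Ideal.eq_top_iff_one _).1 key)
  obtain ⟨c, hc⟩ := (hA s).1 hs
  obtain ⟨d, hd⟩ := (hB t).1 ht
  refine ⟨s, c, d, hc.symm, ?_⟩
  rw [← hst, add_sub_cancel_left]
  exact hd.symm

theorem IsMultiplicationRing.of_comparable {R : Type*} [CommRing R] [IsNoetherianRing R]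
    (h : ∀ x y : R, Comparable R x y) : IsMultiplicationRing R := by
  intro I J hJI
  -- `K` is the colon ideal `(J : I)`.
  let K : Ideal R :=
    { carrier := {r | ∀ y ∈ I, r * y ∈ J}
      add_mem' := fun ha hb y hy => by rw [add_mul]; exact J.add_mem (ha y hy) (hb y hy)
      zero_mem' := fun y _ => by simp
      smul_mem' := fun r a ha y hy => by
        rw [smul_eq_mul, mul_assoc]; exact J.mul_mem_left r (ha y hy) }
  refine ⟨K, le_antisymm (fun j hj => ?_) (Ideal.mul_le.2 fun r hr y hy => hr y hy)⟩
  -- `L` is the colon ideal `(K I : j)`.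
  let L : Ideal R := Submodule.comap (LinearMap.mulRight R j) (K * I)
  suffices L = ⊤ by
    have h1 : (1 : R) * j ∈ K * I := (Ideal.eq_top_iff_one L).1 this
    rwa [one_mul] at h1
  by_contra hne
  obtain ⟨m, hm, hle⟩ := Ideal.exists_le_maximal _ hne
  have := hm.isPrime
  obtain ⟨s, hs, x, hxI, hx⟩ := exists_smul_eq_smul_of_fg h m I (IsNoetherian.noetherian _)
  obtain ⟨c, hc⟩ := hx j (hJI hj)
  simp only [smul_eq_mul] at hc hx
  refine this.mul_notMem hs hs (hle (?_ : s * s * j ∈ K * I))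
  have hK : s * c ∈ K := by
    intro y hy
    obtain ⟨d, hd⟩ := hx y hy
    have : s * c * y = d * s * j := by linear_combination c * hd - d * hc
    rw [this]
    exact J.mul_mem_left _ hj
  have : s * s * j = s * c * x := by linear_combination s * hc
  rw [this]
  exact Ideal.mul_mem_mul hK hxI

/-- With `(x) = A I` and `(y) = B I` for `I = (x, y)`, one has `I = (A + B) I`, and Nakayama's
lemma provides an element of `1 + A + B` that kills `I`. -/
theorem IsMultiplicationRing.comparable {R : Type*} [CommRing R] (h : IsMultiplicationRing R)
    (x y : R) : Comparable R x y := by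
  obtain ⟨A, hA⟩ := h (Ideal.span {x} ⊔ Ideal.span {y}) _ le_sup_left
  obtain ⟨B, hB⟩ := h (Ideal.span {x} ⊔ Ideal.span {y}) _ le_sup_right
  set I := Ideal.span {x} ⊔ Ideal.span {y} with hI
  have hxI : x ∈ I := Ideal.mem_sup_left (Ideal.mem_span_singleton_self x)
  have hyI : y ∈ I := Ideal.mem_sup_right (Ideal.mem_span_singleton_self y)
  have hle : I ≤ (A ⊔ B) • I := by
    rw [smul_eq_mul, Ideal.sup_mul, ← hA, ← hB]
  have hfg : I.FG := Submodule.FG.sup (Submodule.fg_span_singleton x)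
    (Submodule.fg_span_singleton y)
  obtain ⟨r, hr, hr0⟩ :=
    Submodule.exists_sub_one_mem_and_smul_eq_zero_of_fg_of_le_smul _ I hfg hle
  obtain ⟨a, ha, b, hb, hab⟩ := Submodule.mem_sup.1 hr
  have hay : a * y ∈ Ideal.span {x} := hA ▸ Ideal.mul_mem_mul ha hyI
  have hbx : b * x ∈ Ideal.span {y} := hB ▸ Ideal.mul_mem_mul hb hxI
  obtain ⟨c, hc⟩ := Ideal.mem_span_singleton'.1 hbx
  obtain ⟨d, hd⟩ := Ideal.mem_span_singleton'.1 hay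
  have hry : r * y = 0 := hr0 y hyI
  refine ⟨-b, -c, -d, ?_, ?_⟩ <;> simp only [smul_eq_mul]
  · linear_combination hc
  · linear_combination hd + y * hab + hry

/-- A prime `P` strictly contained in a prime `m` satisfies `P = P m`, and hence vanishes in the
localization at `m`. -/
theorem IsMultiplicationRing.exists_mul_eq_zero_of_lt {R : Type*} [CommRing R]
    (h : IsMultiplicationRing R) {P m : Ideal R} [hP : P.IsPrime] [hm : m.IsPrime] (hlt : P < m)
    {x : R} (hx : x ∈ P) : ∃ s ∉ m, s * x = 0 := by
  obtain ⟨I, hI⟩ := h m P hlt.le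
  have hIP : I ≤ P := (hP.mul_le.1 hI.ge).resolve_right hlt.not_ge
  have hPm : P = m * P := le_antisymm (by rw [mul_comm]; exact hI.le.trans (Ideal.mul_mono_left hIP))
    Ideal.mul_le_right
  obtain ⟨K, hK⟩ := h P (Ideal.span {x}) ((Ideal.span_singleton_le_iff_mem _).2 hx)
  have hxm : x ∈ m * Ideal.span {x} := by
    rw [hK, mul_left_comm, ← hPm, ← hK]
    exact Ideal.mem_span_singleton_self x
  obtain ⟨q, hq, hqx⟩ := Ideal.mem_mul_span_singleton.1 hxm
  refine ⟨1 - q, fun hq' => m.one_notMem (by simpa using m.add_mem hq' hq), ?_⟩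
  linear_combination -hqx

/-- An ideal `P` which is not finitely generated vanishes in the localization at some maximal ideal:
the elements `r` for which `r P` lies in a finitely generated subideal of `P` form a proper ideal
`θ`, and `P = θ P`. -/
theorem IsMultiplicationRing.exists_maximal_of_not_fg {R : Type*} [CommRing R]
    (h : IsMultiplicationRing R) {P : Ideal R} (hfg : ¬ P.FG) :
    ∃ m : Ideal R, m.IsMaximal ∧ ∀ x ∈ P, ∃ s ∉ m, s * x = 0 := by
  let θ : Ideal R :=
    { carrier := {r | ∃ F : Ideal R, F.FG ∧ F ≤ P ∧ ∀ y ∈ P, r * y ∈ F}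
      add_mem' := by
        rintro a b ⟨F, hF, hFP, ha⟩ ⟨G, hG, hGP, hb⟩
        refine ⟨F ⊔ G, Submodule.FG.sup hF hG, sup_le hFP hGP, fun y hy => ?_⟩
        rw [add_mul]
        exact Submodule.add_mem_sup (ha y hy) (hb y hy)
      zero_mem' := ⟨⊥, Submodule.fg_bot, bot_le, fun y _ => by simp⟩
      smul_mem' := by
        rintro r a ⟨F, hF, hFP, ha⟩
        refine ⟨F, hF, hFP, fun y hy => ?_⟩
        rw [smul_eq_mul, mul_assoc]
        exact F.mul_mem_left r (ha y hy) }
  have hθ : θ ≠ ⊤ := by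
    intro htop
    obtain ⟨F, hF, hFP, h1⟩ := (Ideal.eq_top_iff_one θ).1 htop
    have : P = F := le_antisymm (fun y hy => by simpa using h1 y hy) hFP
    exact hfg (this ▸ hF)
  have hprin {x : R} (hx : x ∈ P) : ∃ K ≤ θ, Ideal.span {x} = K * P := by
    obtain ⟨K, hK⟩ := h P (Ideal.span {x}) ((Ideal.span_singleton_le_iff_mem _).2 hx)
    refine ⟨K, fun r hr => ⟨Ideal.span {x}, Submodule.fg_span_singleton x,
      (Ideal.span_singleton_le_iff_mem _).2 hx, fun y hy => ?_⟩, hK⟩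
    rw [hK]
    exact Ideal.mul_mem_mul hr hy
  have hPθ : P = θ * P := by
    refine le_antisymm (fun x hx => ?_) Ideal.mul_le_right
    obtain ⟨K, hKθ, hK⟩ := hprin hx
    exact Ideal.mul_mono_left hKθ (hK ▸ Ideal.mem_span_singleton_self x)
  obtain ⟨m, hm, hle⟩ := Ideal.exists_le_maximal _ hθ
  refine ⟨m, hm, fun x hx => ?_⟩
  obtain ⟨K, -, hK⟩ := hprin hx
  have hxθ : x ∈ θ * Ideal.span {x} := by
    rw [hK, mul_left_comm, ← hPθ, ← hK]
    exact Ideal.mem_span_singleton_self x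
  obtain ⟨q, hq, hqx⟩ := Ideal.mem_mul_span_singleton.1 hxθ
  refine ⟨1 - q, fun hq' => hm.isPrime.one_notMem (by simpa using m.add_mem hq' (hle hq)), ?_⟩
  linear_combination -hqx

theorem IsMultiplicationRing.isNoetherianRing {R : Type*} [CommRing R]
    (h : IsMultiplicationRing R) (hfin : (minimalPrimes R).Finite) : IsNoetherianRing R := by
  refine IsNoetherianRing.of_prime fun P hP => ?_
  by_contra hfg
  obtain ⟨m₀, hm₀, h₀⟩ := h.exists_maximal_of_not_fg hfg
  have hPm₀ : P ≤ m₀ := by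
    intro x hx
    obtain ⟨s, hs, hsx⟩ := h₀ x hx
    exact (hm₀.isPrime.mem_or_mem (hsx ▸ m₀.zero_mem)).resolve_left hs
  have hloc (m : Ideal R) (hm : m.IsMaximal) (hPm : P ≤ m) : ∀ x ∈ P, ∃ s ∉ m, s * x = 0 := by
    rcases hPm.eq_or_lt with rfl | hlt
    · rwa [← hm.eq_of_le hm₀.ne_top hPm₀] at h₀
    · have := hm.isPrime
      exact fun x hx => h.exists_mul_eq_zero_of_lt hlt hx
  -- `C` is the intersection of the minimal primes other than `P`.
  let C : Ideal R := (hfin.toFinset.erase P).inf id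
  have hPC : P ⊔ C = ⊤ := by
    by_contra hne
    obtain ⟨m, hm, hle⟩ := Ideal.exists_le_maximal _ hne
    obtain ⟨Q, hQ, hQm⟩ := hm.isPrime.inf_le'.1 (le_sup_right.trans hle)
    rw [Finset.mem_erase, Set.Finite.mem_toFinset] at hQ
    have hQp : Q.IsPrime := hQ.2.1.1
    have hPQ : P ≤ Q := by
      intro x hx
      obtain ⟨s, hs, hsx⟩ := hloc m hm (le_sup_left.trans hle) x hx
      exact (hQp.mem_or_mem (hsx ▸ Q.zero_mem)).resolve_left fun hsQ => hs (hQm hsQ)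
    exact hQ.1 (le_antisymm (hQ.2.2 ⟨hP, bot_le⟩ hPQ) hPQ)
  obtain ⟨p, hp, c, hc, hpc⟩ := Submodule.mem_sup.1 ((Ideal.eq_top_iff_one _).1 hPC)
  have hpm (m : Ideal R) (hm : m.IsMaximal) (hPm : ¬ P ≤ m) : p ∉ m := by
    intro hpm
    have := hm.isPrime
    obtain ⟨Q, hQ, hQm⟩ := Ideal.exists_minimalPrimes_le (I := ⊥) (J := m) bot_le
    have hQC : C ≤ Q := Finset.inf_le (f := id) (Finset.mem_erase.2
      ⟨fun hQP => hPm (hQP ▸ hQm), hfin.mem_toFinset.2 hQ⟩)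
    exact this.one_notMem (hpc ▸ m.add_mem hpm (hQm (hQC hc)))
  suffices P = Ideal.span {p} from hfg (this ▸ Submodule.fg_span_singleton p)
  refine le_antisymm (fun x hx => ?_) ((Ideal.span_singleton_le_iff_mem _).2 hp)
  -- `L` is the colon ideal `((p) : x)`.
  let L : Ideal R := Submodule.comap (LinearMap.mulRight R x) (Ideal.span {p})
  suffices L = ⊤ by
    have h1 : (1 : R) * x ∈ Ideal.span {p} := (Ideal.eq_top_iff_one L).1 this
    rwa [one_mul] at h1
  by_contra hne
  obtain ⟨m, hm, hle⟩ := Ideal.exists_le_maximal _ hne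
  by_cases hPm : P ≤ m
  · obtain ⟨s, hs, hsx⟩ := hloc m hm hPm x hx
    refine hs (hle (?_ : s * x ∈ Ideal.span {p}))
    rw [hsx]
    exact zero_mem _
  · exact hpm m hm hPm (hle (Ideal.mul_mem_right x _ (Ideal.mem_span_singleton_self p)))

/-- A commutative ring `R` is a multiplication ring with only finitely many minimal prime ideals
if and only if there exists a faithful, Noetherian, distributive `R`-module. -/
theorem isMultiplicationRing_and_finitelyManyMinimalPrimes_iff_exists_faithful_noetherian_distributive
    {R : Type u} [CommRing R] :
    (IsMultiplicationRing R ∧ (minimalPrimes R).Finite) ↔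
      ∃ (M : Type u) (_ : AddCommGroup M) (_ : Module R M),
        Module.annihilator R M = ⊥ ∧ IsNoetherian R M ∧ IsDistributiveModule R M := by
  constructor
  · rintro ⟨h, hfin⟩
    exact ⟨R, inferInstance, inferInstance,
      Module.annihilator_eq_bot.2 inferInstance,
      h.isNoetherianRing hfin, isDistributiveModule_of_comparable h.comparable⟩
  · rintro ⟨M, _, _, hann, hN, hdist⟩
    have := isNoetherianRing_of_faithful hann
    exact ⟨.of_comparable (comparable_of_faithful hann hdist.comparable),
      minimalPrimes.finite_of_isNoetherianRing R⟩
end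

section
/- Let R be a commutative ring and let M be an R-module that is an internal direct sum M = ⊕_{λ ∈ Λ} M_λ of nonzero submodules M_λ with card(Λ) ≥ 2. Then M is a multiplication R-module if and only if both of the following hold: (a) (intersection condition) for every submodule N of M, N = ⊕_{λ ∈ Λ} (N ∩ M_λ); and (b) (strong orthogonality condition) for every family {N_λ}_{λ ∈ Λ} with N_λ a submodule of M_λ for each λ, there exists a family of ideals {I_λ}_{λ ∈ Λ} of R such that I_λ M_μ = δ_{λμ} N_λ for all λ, μ ∈ Λ (where δ_{λμ} is the Kronecker delta, i.e., I_λ M_λ = N_λ and I_λ M_μ = 0 for μ ≠ λ). -/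
/-- Let `R` be a commutative ring and let `M` be an `R`-module that is an internal direct sum
`M = ⊕_{λ ∈ Λ} M_λ` of nonzero submodules `M_λ` with `card(Λ) ≥ 2`. Then `M` is a multiplication
`R`-module if and only if both the intersection condition (for every submodule `N` of `M`,
`N = ⊕_{λ} (N ∩ M_λ)`) and the strong orthogonality condition (for every family `{N_λ}` of
submodules with `N_λ ⊆ M_λ` there is a family of ideals `{I_λ}` with `I_λ M_μ = δ_{λμ} N_λ`)
hold. -/
theorem isMultiplicationModule_iff_intersection_and_strongOrthogonality
    {R : Type*} [CommRing R] {M : Type*} [AddCommGroup M] [Module R M]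
    {Λ : Type*} [DecidableEq Λ] [Nontrivial Λ]
    (Mfam : Λ → Submodule R M) (hint : DirectSum.IsInternal Mfam)
    (hnz : ∀ l, Mfam l ≠ ⊥) :
    IsMultiplicationModule R M ↔
      ((∀ N : Submodule R M, N = ⨆ l, N ⊓ Mfam l) ∧
        (∀ Nfam : Λ → Submodule R M, (∀ l, Nfam l ≤ Mfam l) →
          ∃ Ifam : Λ → Ideal R,
            ∀ l m, Ifam l • Mfam m = if l = m then Nfam l else ⊥)) := by
  have htop : (⨆ m, Mfam m) = ⊤ := hint.submodule_iSup_eq_top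
  have hdisj : ∀ l m, l ≠ m → Mfam l ⊓ Mfam m = ⊥ := fun l m h =>
    (hint.submodule_iSupIndep.pairwiseDisjoint h).eq_bot
  have hsmul : ∀ I : Ideal R, I • (⊤ : Submodule R M) = ⨆ m, I • Mfam m := fun I => by
    rw [← htop, Submodule.smul_iSup]
  constructor
  · intro hM
    refine ⟨fun N => le_antisymm ?_ (iSup_le fun l => inf_le_left), fun Nfam hN => ?_⟩
    · obtain ⟨I, hI⟩ := hM N
      have hle : ∀ m, I • Mfam m ≤ N ⊓ Mfam m := fun m =>
        le_inf (hI ▸ Submodule.smul_mono le_rfl le_top) Submodule.smul_le_right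
      calc N = ⨆ m, I • Mfam m := hI.trans (hsmul I)
        _ ≤ ⨆ m, N ⊓ Mfam m := iSup_mono hle
    · choose I hI using fun l => hM (Nfam l)
      have hoff : ∀ l m, l ≠ m → I l • Mfam m = ⊥ := fun l m h => by
        have hle : I l • Mfam m ≤ Nfam l := by
          rw [hI l]
          exact Submodule.smul_mono le_rfl le_top
        exact le_bot_iff.1 ((le_inf (hle.trans (hN l)) Submodule.smul_le_right).trans
          (hdisj l m h).le)
      refine ⟨I, fun l m => ?_⟩
      split_ifs with h
      · subst h
        rw [hI l, hsmul]
        refine le_antisymm (le_iSup (fun m => I l • Mfam m) l) (iSup_le fun m => ?_)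
        by_cases h : l = m
        · rw [h]
        · rw [hoff l m h]
          exact bot_le
      · exact hoff l m h
  · rintro ⟨hcap, horth⟩ N
    obtain ⟨I, hI⟩ := horth (fun l => N ⊓ Mfam l) fun l => inf_le_right
    refine ⟨⨆ l, I l, ?_⟩
    rw [Submodule.iSup_smul]
    simp only [hsmul, hI, iSup_ite, iSup_bot, sup_bot_eq, iSup_iSup_eq_right]
    exact hcap N
end

section
/- Let R be an Artinian multiplication ring (i.e., a multiplication ring that is Artinian as a ring). Then every multiplication R-module is an epimorphic image of the R-module R; equivalently, every multiplication R-module is cyclic. -/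
/-- Ideals `A` with `N + AM = M` are closed under multiplication, as
`M = N + A(N + BM) ⊆ N + ABM`. -/
theorem sup_mul_smul_top {R M : Type*} [CommRing R] [AddCommGroup M] [Module R M]
    {N : Submodule R M} {A B : Ideal R} (hA : N ⊔ A • (⊤ : Submodule R M) = ⊤)
    (hB : N ⊔ B • (⊤ : Submodule R M) = ⊤) : N ⊔ (A * B) • (⊤ : Submodule R M) = ⊤ := by
  rw [eq_top_iff]
  calc (⊤ : Submodule R M) = N ⊔ A • (N ⊔ B • (⊤ : Submodule R M)) := by rw [hB, hA]
    _ = N ⊔ (A • N ⊔ (A * B) • (⊤ : Submodule R M)) := by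
      rw [Submodule.smul_sup, Submodule.mul_smul]
    _ ≤ _ := sup_le le_sup_left (sup_le (Submodule.smul_le_right.trans le_sup_left) le_sup_right)

/-- A single element avoids every proper submodule `PM` with `P` maximal, when there are only
finitely many maximal ideals. -/
theorem exists_notMem_smul_top {R M : Type*} [CommRing R] [AddCommGroup M] [Module R M]
    [Finite (MaximalSpectrum R)] :
    ∃ x : M, ∀ P : MaximalSpectrum R, P.asIdeal • (⊤ : Submodule R M) ≠ ⊤ →
      x ∉ P.asIdeal • (⊤ : Submodule R M) := by
  classical
  cases nonempty_fintype (MaximalSpectrum R)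
  have key : ∀ P : MaximalSpectrum R, ∃ y : M, P.asIdeal • (⊤ : Submodule R M) ≠ ⊤ →
      y ∉ P.asIdeal • (⊤ : Submodule R M) := by
    intro P
    by_cases h : P.asIdeal • (⊤ : Submodule R M) = ⊤
    · exact ⟨0, fun h' => absurd h h'⟩
    · obtain ⟨y, -, hy⟩ := SetLike.exists_of_lt (lt_top_iff_ne_top.mpr h)
      exact ⟨y, fun _ => hy⟩
  choose y hy using key
  have hcop : Pairwise fun P Q : MaximalSpectrum R => IsCoprime P.asIdeal Q.asIdeal := by
    intro P Q hPQ
    exact Ideal.isCoprime_of_isMaximal (fun h => hPQ (MaximalSpectrum.ext h))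
  have he : ∀ P : MaximalSpectrum R, ∃ e : R, ∀ Q : MaximalSpectrum R,
      e - (if Q = P then 1 else 0) ∈ Q.asIdeal := fun P =>
    Ideal.exists_forall_sub_mem_ideal hcop _
  choose e he using he
  refine ⟨∑ P, e P • y P, fun P hP hmem => hy P hP ?_⟩
  -- Modulo `PM` the sum collapses to its `P`-th term `y P`.
  have hdiff : (∑ Q, e Q • y Q) - y P ∈ P.asIdeal • (⊤ : Submodule R M) := by
    have : (∑ Q, e Q • y Q) - y P = ∑ Q, (e Q - (if P = Q then 1 else 0)) • y Q := by
      simp [sub_smul, Finset.sum_sub_distrib, ite_smul]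
    rw [this]
    exact Submodule.sum_mem _ fun Q _ => Submodule.smul_mem_smul (he Q P) trivial
  simpa using Submodule.sub_mem _ hmem hdiff

/-- Let `R` be an Artinian multiplication ring. Then every multiplication `R`-module is an
epimorphic image of the `R`-module `R`; equivalently, every multiplication `R`-module is
cyclic. -/
theorem multiplicationModule_cyclic_of_artinian_multiplicationRing
    {R : Type u} [CommRing R] (hR : IsMultiplicationRing R) (hArt : IsArtinianRing R)
    (M : Type v) [AddCommGroup M] [Module R M] (hM : IsMultiplicationModule R M) :
    (∃ f : R →ₗ[R] M, Function.Surjective f) ∧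
      (∃ m : M, Submodule.span R {m} = ⊤) := by
  obtain ⟨x, hx⟩ := exists_notMem_smul_top (R := R) (M := M)
  have hgen : Submodule.span R {x} = ⊤ := by
    cases nonempty_fintype (MaximalSpectrum R)
    obtain ⟨I, hI⟩ := hM (Submodule.span R {x})
    have hmax : ∀ P : MaximalSpectrum R,
        Submodule.span R {x} ⊔ P.asIdeal • (⊤ : Submodule R M) = ⊤ := by
      intro P
      by_cases h : P.asIdeal • (⊤ : Submodule R M) = ⊤
      · rw [h, sup_top_eq]
      · have hIP : ¬ I ≤ P.asIdeal := fun hle =>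
          hx P h (Submodule.smul_mono_left hle (hI ▸ Submodule.mem_span_singleton_self x))
        have hsup : I ⊔ P.asIdeal = ⊤ := by
          rw [sup_comm]
          exact P.isMaximal.1.2 _ (left_lt_sup.mpr hIP)
        rw [hI, ← Submodule.sup_smul, hsup, Submodule.top_smul]
    have hprod : Submodule.span R {x} ⊔
        (∏ P : MaximalSpectrum R, P.asIdeal) • (⊤ : Submodule R M) = ⊤ := by
      refine Finset.prod_induction _
        (fun A : Ideal R => Submodule.span R {x} ⊔ A • (⊤ : Submodule R M) = ⊤)
        (fun A B => sup_mul_smul_top) ?_ fun P _ => hmax P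
      rw [Ideal.one_eq_top, Submodule.top_smul, sup_top_eq]
    have hpow : ∀ n : ℕ, Submodule.span R {x} ⊔
        (∏ P : MaximalSpectrum R, P.asIdeal) ^ n • (⊤ : Submodule R M) = ⊤ := by
      intro n
      induction n with
      | zero => rw [pow_zero, Ideal.one_eq_top, Submodule.top_smul, sup_top_eq]
      | succ n ih => exact pow_succ (∏ P : MaximalSpectrum R, P.asIdeal) n ▸
          sup_mul_smul_top ih hprod
    obtain ⟨n, hn⟩ := IsArtinianRing.isNilpotent_jacobson_bot (R := R)
    have hle : (∏ P : MaximalSpectrum R, P.asIdeal) ≤ Ideal.jacobson ⊥ := by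
      refine Ideal.prod_le_inf.trans (le_sInf ?_)
      rintro Q ⟨-, hQ⟩
      exact Finset.inf_le (f := MaximalSpectrum.asIdeal) (Finset.mem_univ ⟨Q, hQ⟩)
    have hzero : (∏ P : MaximalSpectrum R, P.asIdeal) ^ n = ⊥ :=
      le_bot_iff.mp ((Ideal.pow_right_mono hle n).trans hn.le)
    simpa [hzero] using hpow n
  refine ⟨⟨LinearMap.toSpanSingleton R M x, ?_⟩, x, hgen⟩
  rw [← LinearMap.range_eq_top, LinearMap.range_toSpanSingleton, hgen]
end

section
/- Let R be a multiplication ring with only finitely many minimal prime ideals and let M be a multiplication R-module. Then End_R(M) is isomorphic as a ring to R/ann_R(M), the isomorphism being induced by the natural ring homomorphism R → End_R(M) sending r to scalar multiplication by r. -/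
/-- The ideal `θ(M) = ∑ₘ (Rm : M)` attached to an `R`-module `M`. -/
def thetaIdeal (R : Type*) (M : Type*) [CommRing R] [AddCommGroup M] [Module R M] : Ideal R :=
  ⨆ m : M, (Submodule.span R {m}).colon (Set.univ : Set M)

section

variable {R M : Type*} [CommRing R] [AddCommGroup M] [Module R M]

theorem smul_mem_of_mem_colon {m x : M} {t : R}
    (ht : t ∈ (Submodule.span R {m}).colon (Set.univ : Set M)) :
    t • x ∈ Submodule.span R {m} :=
  Submodule.mem_colon.1 ht x (Set.mem_univ x)

theorem IsMultiplicationModule.span_eq_colon_smul_top (hM : IsMultiplicationModule R M) (m : M) :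
    Submodule.span R {m} =
      (Submodule.span R {m}).colon (Set.univ : Set M) • (⊤ : Submodule R M) := by
  apply le_antisymm
  · obtain ⟨I, hI⟩ := hM (Submodule.span R {m})
    conv_lhs => rw [hI]
    refine Submodule.smul_mono_left fun t ht => Submodule.mem_colon.2 fun x _ => ?_
    rw [hI]
    exact Submodule.smul_mem_smul ht trivial
  · exact Submodule.smul_le.2 fun t ht x _ => smul_mem_of_mem_colon ht

/-- Since `M = θ(M) M`, also `R m = (Rm : M) M = θ(M) (Rm : M) M = θ(M) m`. -/
theorem IsMultiplicationModule.exists_mem_thetaIdeal_smul_eq (hM : IsMultiplicationModule R M)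
    (m : M) : ∃ t ∈ thetaIdeal R M, t • m = m := by
  have htop : thetaIdeal R M • (⊤ : Submodule R M) = ⊤ := by
    refine eq_top_iff.2 fun x _ => ?_
    have hx : x ∈ Submodule.span R {x} := Submodule.mem_span_singleton_self x
    rw [hM.span_eq_colon_smul_top x] at hx
    exact Submodule.smul_mono_left (le_iSup (fun m : M =>
      (Submodule.span R {m}).colon (Set.univ : Set M)) x) hx
  have hspan : Submodule.span R {m} = thetaIdeal R M • Submodule.span R {m} := by
    conv_rhs => rw [hM.span_eq_colon_smul_top m]
    rw [← Submodule.mul_smul, mul_comm, Submodule.mul_smul, htop]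
    exact hM.span_eq_colon_smul_top m
  have hm : m ∈ Submodule.span R {m} := Submodule.mem_span_singleton_self m
  rw [hspan] at hm
  exact Submodule.mem_smul_span_singleton.1 hm

theorem IsMultiplicationModule.thetaIdeal_sup_eq_top (hM : IsMultiplicationModule R M)
    {Q : Ideal R} [hQ : Q.IsPrime] (hA : Module.annihilator R M ≤ Q)
    (hθ : ¬ thetaIdeal R M ≤ Q) : thetaIdeal R M ⊔ Q = ⊤ := by
  obtain ⟨m, hm⟩ : ∃ m : M, ¬ (Submodule.span R {m}).colon (Set.univ : Set M) ≤ Q := by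
    by_contra! h
    exact hθ (iSup_le h)
  obtain ⟨c, hc, hcQ⟩ := SetLike.not_le_iff_exists.1 hm
  obtain ⟨t, ht, htm⟩ := hM.exists_mem_thetaIdeal_smul_eq m
  -- `ann m ⊆ Q`, since `c M ⊆ R m` and `c ∉ Q`
  have h1 : (1 - t) * c ∈ Q := by
    refine hA (Module.mem_annihilator.2 fun x => ?_)
    obtain ⟨r, hr⟩ := Submodule.mem_span_singleton.1 (smul_mem_of_mem_colon (x := x) hc)
    rw [mul_smul, ← hr, smul_comm, sub_smul, one_smul, htm, sub_self, smul_zero]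
  have h2 : 1 - t ∈ Q := (hQ.mem_or_mem h1).resolve_right hcQ
  rw [Ideal.eq_top_iff_one]
  simpa using Submodule.add_mem_sup ht h2

theorem IsMultiplicationModule.thetaIdeal_eq_top (hM : IsMultiplicationModule R M)
    (hfin : (Module.annihilator R M).minimalPrimes.Finite) : thetaIdeal R M = ⊤ := by
  classical
  let s : Finset (Ideal R) := hfin.toFinset.filter fun Q => ¬ thetaIdeal R M ≤ Q
  have hs : thetaIdeal R M ⊔ ⨅ Q ∈ s, Q = ⊤ := by
    refine Ideal.sup_iInf_eq_top fun Q hQ => ?_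
    simp only [s, Finset.mem_filter, Set.Finite.mem_toFinset] at hQ
    have := hQ.1.1.1
    exact hM.thetaIdeal_sup_eq_top hQ.1.1.2 hQ.2
  have hnil : ∀ a ∈ thetaIdeal R M, ∀ b ∈ ⨅ Q ∈ s, Q,
      ∃ n : ℕ, (a * b) ^ n ∈ Module.annihilator R M := by
    intro a ha b hb
    change a * b ∈ (Module.annihilator R M).radical
    rw [← Ideal.sInf_minimalPrimes, Submodule.mem_sInf]
    intro Q hQ
    by_cases h : thetaIdeal R M ≤ Q
    · exact Ideal.mul_mem_right _ Q (h ha)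
    · refine Ideal.mul_mem_left Q _ ?_
      simp only [Submodule.mem_iInf] at hb
      exact hb Q (by simp [s, hQ, h])
  obtain ⟨a, ha, b, hb, hab⟩ := Submodule.mem_sup.1 ((Ideal.eq_top_iff_one _).1 hs)
  obtain ⟨k, hk⟩ := hnil a ha b hb
  have hk' : (a * b) ^ (k + 1) ∈ Module.annihilator R M := by
    rw [pow_succ]; exact Ideal.mul_mem_right _ _ hk
  have hcop : IsCoprime a b := ⟨1, 1, by simpa using hab⟩
  -- `y * b ^ (k + 1)` is idempotent modulo the annihilator of `M`
  obtain ⟨x, y, hxy⟩ := hcop.pow (m := k + 1) (n := k + 1)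
  set e := y * b ^ (k + 1) with he
  have hidem : ∀ m : M, e • e • m = e • m := by
    intro m
    have h0 : (e * (x * a ^ (k + 1))) • m = 0 := by
      have : e * (x * a ^ (k + 1)) = (y * x) * (a * b) ^ (k + 1) := by rw [he]; ring
      rw [this, mul_smul, Module.mem_annihilator.1 hk' m, smul_zero]
    calc e • e • m = (e * e) • m + (e * (x * a ^ (k + 1))) • m := by rw [h0, add_zero, mul_smul e e]
      _ = (e * (x * a ^ (k + 1) + e)) • m := by rw [← add_smul]; congr 1; ring
      _ = e • m := by rw [hxy, mul_one]
  have heb : e ∈ ⨅ Q ∈ s, Q := Ideal.mul_mem_left _ _ (Ideal.pow_mem_of_mem _ hb _ k.succ_pos)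
  have hzero : ∀ m : M, e • m = 0 := by
    intro m
    obtain ⟨t, ht, htm⟩ := hM.exists_mem_thetaIdeal_smul_eq m
    obtain ⟨n, hn⟩ := hnil t ht e heb
    have hpow : ∀ n : ℕ, (t * e) ^ n • e • m = e • m := by
      intro n
      induction n with
      | zero => simp
      | succ n ih =>
        rw [pow_succ, mul_smul, mul_smul t, hidem, smul_comm t, htm, ih]
    rw [← hpow n, Module.mem_annihilator.1 hn]
  have hann : e ∈ Module.annihilator R M := Module.mem_annihilator.2 hzero
  have hle : Module.annihilator R M ≤ thetaIdeal R M := by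
    intro c hc
    refine le_iSup (fun m : M => (Submodule.span R {m}).colon (Set.univ : Set M)) 0 ?_
    exact Submodule.mem_colon.2 fun x _ => by simp [Module.mem_annihilator.1 hc x]
  rw [Ideal.eq_top_iff_one, ← hxy]
  exact Ideal.add_mem _ (Ideal.mul_mem_left _ _ (Ideal.pow_mem_of_mem _ ha _ k.succ_pos))
    (hle hann)

theorem IsMultiplicationModule.exists_eq_smul_of_thetaIdeal_eq_top
    (hM : IsMultiplicationModule R M) (hθ : thetaIdeal R M = ⊤) (f : Module.End R M) :
    ∃ r : R, ∀ x, f x = r • x := by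
  let K : Ideal R :=
    { carrier := {t | ∃ r : R, ∀ x, f (t • x) = r • x}
      zero_mem' := ⟨0, by simp⟩
      add_mem' := by
        rintro s t ⟨p, hp⟩ ⟨q, hq⟩
        exact ⟨p + q, fun x => by rw [add_smul, map_add, hp, hq, add_smul]⟩
      smul_mem' := by
        rintro c t ⟨p, hp⟩
        exact ⟨c * p, fun x => by rw [smul_eq_mul, mul_smul, map_smul, hp, mul_smul]⟩ }
  have hK : thetaIdeal R M ≤ K := by
    refine iSup_le fun m t ht => ?_
    have hfm : f m ∈ Submodule.span R {m} := by
      have hm : m ∈ Submodule.span R {m} := Submodule.mem_span_singleton_self m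
      rw [hM.span_eq_colon_smul_top m] at hm ⊢
      have := Submodule.mem_map_of_mem (f := f) hm
      rw [Submodule.map_smul''] at this
      exact Submodule.smul_mono le_rfl le_top this
    obtain ⟨r, hr⟩ := Submodule.mem_span_singleton.1 hfm
    refine ⟨r * t, fun x => ?_⟩
    obtain ⟨c, hc⟩ := Submodule.mem_span_singleton.1 (smul_mem_of_mem_colon (x := x) ht)
    rw [mul_smul, ← hc, map_smul, ← hr, smul_comm]
  obtain ⟨r, hr⟩ := hK (hθ ▸ Submodule.mem_top : (1 : R) ∈ thetaIdeal R M)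
  exact ⟨r, fun x => by simpa using hr x⟩

theorem IsMultiplicationRing.quotient (hR : IsMultiplicationRing R) (Q : Ideal R) :
    IsMultiplicationRing (R ⧸ Q) := by
  intro I J hJI
  have hs : Function.Surjective (Ideal.Quotient.mk Q) := Ideal.Quotient.mk_surjective
  obtain ⟨I', hI'⟩ := hR _ _ (Ideal.comap_mono (f := Ideal.Quotient.mk Q) hJI)
  refine ⟨I'.map (Ideal.Quotient.mk Q), ?_⟩
  rw [← Ideal.map_comap_of_surjective _ hs J, hI', Ideal.map_mul,
    Ideal.map_comap_of_surjective _ hs I]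

/-- In a multiplication domain, a principal ideal contained in a nonzero ideal is a multiple of
it, so nonzero ideals are invertible and hence finitely generated. -/
theorem IsMultiplicationRing.isNoetherianRing_s8 [IsDomain R] (hR : IsMultiplicationRing R) :
    IsNoetherianRing R := by
  rw [isNoetherianRing_iff_ideal_fg]
  intro I
  by_cases hI : I = ⊥
  · rw [hI]; exact Submodule.fg_bot
  obtain ⟨a, ha, ha0⟩ := Submodule.exists_mem_ne_zero_of_ne_bot hI
  obtain ⟨I', hI'⟩ := hR I (Ideal.span {a}) ((Ideal.span_singleton_le_iff_mem I).2 ha)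
  refine Ideal.fg_of_isUnit (S := nonZeroDivisors R) (P := FractionRing R)
    (IsFractionRing.injective R (FractionRing R)) I ?_
  have hu : IsUnit ((Ideal.span {a} : Ideal R) :
      FractionalIdeal (nonZeroDivisors R) (FractionRing R)) := by
    have ha' : algebraMap R (FractionRing R) a ≠ 0 := by simpa using ha0
    rw [FractionalIdeal.coeIdeal_span_singleton]
    refine IsUnit.of_mul_eq_one (FractionalIdeal.spanSingleton _ (algebraMap R _ a)⁻¹) ?_
    rw [FractionalIdeal.spanSingleton_mul_spanSingleton, mul_inv_cancel₀ ha',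
      FractionalIdeal.spanSingleton_one]
  rw [hI', FractionalIdeal.coeIdeal_mul] at hu
  exact isUnit_of_mul_isUnit_right hu

/-- A minimal prime of `A` contains some minimal prime `Q` of `R`, so it is one of the finitely many
primes minimal over `A + Q`. -/
theorem IsMultiplicationRing.finite_minimalPrimes (hR : IsMultiplicationRing R)
    (hfin : (minimalPrimes R).Finite) (A : Ideal R) : A.minimalPrimes.Finite := by
  have hfinQ : ∀ Q ∈ minimalPrimes R, (A ⊔ Q).minimalPrimes.Finite := by
    intro Q hQ
    have : Q.IsPrime := hQ.1.1
    have : IsNoetherianRing (R ⧸ Q) := (hR.quotient Q).isNoetherianRing_s8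
    have hs : Function.Surjective (Ideal.Quotient.mk Q) := Ideal.Quotient.mk_surjective
    have hcomap : A ⊔ Q = (A.map (Ideal.Quotient.mk Q)).comap (Ideal.Quotient.mk Q) := by
      rw [Ideal.comap_map_of_surjective' _ hs, Ideal.mk_ker]
    rw [hcomap, Ideal.comap_minimalPrimes_eq_of_surjective hs]
    exact (Ideal.finite_minimalPrimes_of_isNoetherianRing _ _).image _
  refine (hfin.biUnion hfinQ).subset fun P hP => ?_
  have : P.IsPrime := hP.1.1
  obtain ⟨Q, hQ, hQP⟩ := Ideal.exists_minimalPrimes_le (bot_le : (⊥ : Ideal R) ≤ P)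
  refine Set.mem_biUnion hQ ⟨⟨hP.1.1, sup_le hP.1.2 hQP⟩, fun P' hP' hle => ?_⟩
  exact hP.2 ⟨hP'.1, le_sup_left.trans hP'.2⟩ hle

end

/-- Let `R` be a multiplication ring with only finitely many minimal prime ideals and let `M` be
a multiplication `R`-module. Then `End_R(M)` is isomorphic as a ring to `R / ann_R(M)`, the
isomorphism being induced by the natural ring homomorphism `R → End_R(M)` sending `r` to scalar
multiplication by `r`. -/
theorem end_ringEquiv_quotient_annihilator
    {R : Type u} [CommRing R] (hR : IsMultiplicationRing R)
    (hfin : (minimalPrimes R).Finite)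
    (M : Type v) [AddCommGroup M] [Module R M] (hM : IsMultiplicationModule R M) :
    ∃ e : (R ⧸ Module.annihilator R M) ≃+* Module.End R M,
      ∀ r : R, e (Ideal.Quotient.mk (Module.annihilator R M) r) =
        algebraMap R (Module.End R M) r := by
  have hsurj : Function.Surjective (algebraMap R (Module.End R M)) := by
    intro f
    obtain ⟨r, hr⟩ := hM.exists_eq_smul_of_thetaIdeal_eq_top
      (hM.thetaIdeal_eq_top (hR.finite_minimalPrimes hfin _)) f
    exact ⟨r, LinearMap.ext fun x => (hr x).symm⟩
  have hker : Module.annihilator R M = RingHom.ker (algebraMap R (Module.End R M)) := by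
    ext r
    rw [Module.mem_annihilator, RingHom.mem_ker, LinearMap.ext_iff]
    rfl
  exact ⟨(Ideal.quotEquivOfEq hker).trans (RingHom.quotientKerEquivOfSurjective hsurj),
    fun r => rfl⟩
end

section
/- Let R be a multiplication ring with only finitely many minimal prime ideals and let M be a multiplication R-module. Then M, regarded as a module over End_R(M) via evaluation, is a faithful multiplication End_R(M)-module. -/
/-- Let `R` be a multiplication ring with only finitely many minimal prime ideals and let `M` be
a multiplication `R`-module. Then `M`, regarded as a module over `End_R(M)` via evaluation, is a
faithful multiplication `End_R(M)`-module. -/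
theorem faithful_multiplication_over_end
    {R : Type u} [CommRing R] (hR : IsMultiplicationRing R)
    (hfin : (minimalPrimes R).Finite)
    (M : Type v) [AddCommGroup M] [Module R M] (hM : IsMultiplicationModule R M) :
    Module.annihilator (Module.End R M) M = ⊥ ∧
      IsMultiplicationModule (Module.End R M) M := by
  refine ⟨?_, fun N ↦ ?_⟩
  · rw [eq_bot_iff]
    intro φ hφ
    rw [Module.mem_annihilator] at hφ
    exact (Submodule.mem_bot _).2 (LinearMap.ext hφ)
  · obtain ⟨I, hI⟩ := hM (N.restrictScalars R)
    have hmem : ∀ r ∈ I, ∀ m : M, r • m ∈ N := fun r hr m ↦ by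
      have h : r • m ∈ I • (⊤ : Submodule R M) := Submodule.smul_mem_smul hr trivial
      rw [← hI] at h
      exact h
    refine ⟨Ideal.span (algebraMap R (Module.End R M) '' I), le_antisymm (fun n hn ↦ ?_) ?_⟩
    · have h : n ∈ I • (⊤ : Submodule R M) := hI ▸ hn
      refine Submodule.smul_induction_on h (fun r hr m _ ↦ ?_) (fun x y hx hy ↦ add_mem hx hy)
      have := Submodule.smul_mem_smul (N := (⊤ : Submodule (Module.End R M) M)) (n := m)
        (Ideal.subset_span (Set.mem_image_of_mem (algebraMap R (Module.End R M)) hr)) trivial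
      simpa using this
    · refine Submodule.smul_le.2 fun φ hφ m _ ↦ ?_
      induction hφ using Submodule.span_induction with
      | mem x hx =>
        obtain ⟨r, hr, rfl⟩ := hx
        simpa using hmem r hr m
      | zero => simp
      | add x y _ _ hx hy => rw [add_smul]; exact add_mem hx hy
      | smul a x _ hx => rw [smul_eq_mul, mul_smul]; exact N.smul_mem a hx
end

section
/- Let R be a Noetherian commutative ring and let M be a multiplication R-module. Then M is a finitely generated R-module. -/
/-- Let `R` be a Noetherian commutative ring and let `M` be a multiplication `R`-module. Then
`M` is a finitely generated `R`-module. -/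
theorem finite_of_multiplicationModule_of_noetherianRing
    {R : Type u} [CommRing R] [IsNoetherianRing R]
    (M : Type v) [AddCommGroup M] [Module R M] (hM : IsMultiplicationModule R M) :
    Module.Finite R M := by
  obtain ⟨I, hI, hmax⟩ := set_has_maximal_iff_noetherian.mpr ‹IsNoetherianRing R›
    {I : Ideal R | (I • (⊤ : Submodule R M)).FG}
    ⟨⊥, by simpa using (Submodule.fg_bot : (⊥ : Submodule R M).FG)⟩
  have htop : I • (⊤ : Submodule R M) = ⊤ := by
    refine eq_top_iff.mpr fun x _ => ?_
    obtain ⟨J, hJ⟩ := hM (Submodule.span R {x})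
    have hfg : ((I ⊔ J) • (⊤ : Submodule R M)).FG := by
      rw [Submodule.sup_smul, ← hJ]
      exact Submodule.FG.sup hI (Submodule.fg_span_singleton x)
    have hJI : J ≤ I := by
      by_contra h
      exact hmax (I ⊔ J) hfg (left_lt_sup.mpr h)
    have hx : x ∈ J • (⊤ : Submodule R M) := hJ ▸ Submodule.mem_span_singleton_self x
    exact Submodule.smul_mono_left hJI hx
  exact ⟨htop ▸ hI⟩
end

section
/- Let D be a Dedekind domain and let M be a nonzero multiplication D-module. Then M is isomorphic either to D, or to D/I for some nonzero proper ideal I of D, or to a nonzero ideal of D. -/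
/-- Chinese remainder theorem for elements of a module: finitely many nonmembership conditions
modulo nonzero prime ideals can be met simultaneously. -/
theorem exists_forall_notMem_smul_top {D M : Type*} [CommRing D] [IsDedekindDomain D]
    [AddCommGroup M] [Module D M] (S : Finset (Ideal D)) (hprime : ∀ P ∈ S, Prime P)
    (hS : ∀ P ∈ S, P • (⊤ : Submodule D M) ≠ ⊤) :
    ∃ m : M, ∀ P ∈ S, m ∉ P • (⊤ : Submodule D M) := by
  classical
  have hx : ∀ P ∈ S, ∃ x : M, x ∉ P • (⊤ : Submodule D M) := by
    intro P hP
    by_contra! h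
    exact hS P hP (eq_top_iff.2 fun x _ => h x)
  choose! x hx using hx
  have he : ∀ Q : Ideal D, ∃ e : D, ∀ P ∈ S, e - (if P = Q then 1 else 0) ∈ P := by
    intro Q
    obtain ⟨e, he⟩ := IsDedekindDomain.exists_forall_sub_mem_ideal (s := S) (fun P => P)
      (fun _ => 1) hprime (fun _ _ _ _ h => h) (fun P => if P.1 = Q then 1 else 0)
    exact ⟨e, fun P hP => by simpa using he P hP⟩
  choose e he using he
  refine ⟨∑ Q ∈ S, e Q • x Q, fun P hP hm => hx P hP ?_⟩
  rw [← Finset.add_sum_erase S _ hP] at hm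
  have h1 : ∑ Q ∈ S.erase P, e Q • x Q ∈ P • (⊤ : Submodule D M) := by
    refine Submodule.sum_mem _ fun Q hQ => Submodule.smul_mem_smul ?_ trivial
    have := he Q P hP
    rwa [if_neg (Finset.ne_of_mem_erase hQ).symm, sub_zero] at this
  have h2 := (Submodule.add_mem_iff_left _ h1).1 hm
  have h3 : (e P - 1) • x P ∈ P • (⊤ : Submodule D M) := by
    refine Submodule.smul_mem_smul ?_ trivial
    simpa using he P P hP
  have h4 := Submodule.sub_mem _ h2 h3
  rwa [← sub_smul, sub_sub_cancel, one_smul] at h4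

theorem multiset_prod_smul_top {D M : Type*} [CommRing D] [AddCommGroup M] [Module D M]
    (s : Multiset (Ideal D)) (hs : ∀ P ∈ s, P • (⊤ : Submodule D M) = ⊤) :
    s.prod • (⊤ : Submodule D M) = ⊤ := by
  induction s using Multiset.induction_on with
  | empty => simp
  | cons P s ih =>
    rw [Multiset.prod_cons, mul_smul, ih fun Q hQ => hs Q (Multiset.mem_cons_of_mem hQ),
      hs P (Multiset.mem_cons_self P s)]

/-- A multiplication module with nonzero annihilator is cyclic. -/
theorem IsMultiplicationModule.exists_span_singleton_eq_top {D M : Type*} [CommRing D]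
    [IsDedekindDomain D] [AddCommGroup M] [Module D M] (hM : IsMultiplicationModule D M)
    (hA : Module.annihilator D M ≠ ⊥) : ∃ m : M, Submodule.span D {m} = ⊤ := by
  classical
  set A := Module.annihilator D M with hAdef
  have hAM : A • (⊤ : Submodule D M) = ⊥ := by
    rw [eq_bot_iff, Submodule.smul_le]
    intro a ha x _
    exact (Submodule.mem_bot D).2 (Module.mem_annihilator.1 ha x)
  let S := (UniqueFactorizationMonoid.normalizedFactors A).toFinset.filter
    (fun P => P • (⊤ : Submodule D M) ≠ ⊤)
  obtain ⟨m, hm⟩ := exists_forall_notMem_smul_top (M := M) S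
    (fun P hP => UniqueFactorizationMonoid.prime_of_normalized_factor P
      (Multiset.mem_toFinset.1 (Finset.mem_filter.1 hP).1))
    (fun P hP => (Finset.mem_filter.1 hP).2)
  refine ⟨m, ?_⟩
  obtain ⟨I, hI⟩ := hM (Submodule.span D {m})
  have hIA : Submodule.span D {m} = (I ⊔ A) • (⊤ : Submodule D M) := by
    rw [Submodule.sup_smul, hAM, sup_bot_eq, hI]
  have hne : I ⊔ A ≠ 0 := fun h => hA (eq_bot_iff.2 (le_sup_right.trans h.le))
  have hprod := associated_iff_eq.1 (UniqueFactorizationMonoid.prod_normalizedFactors hne)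
  rw [hIA, ← hprod]
  refine multiset_prod_smul_top _ fun P hP => ?_
  have hle : I ⊔ A ≤ P :=
    Ideal.dvd_iff_le.1 (UniqueFactorizationMonoid.dvd_of_mem_normalizedFactors hP)
  by_contra hPM
  refine hm P (Finset.mem_filter.2 ⟨Multiset.mem_toFinset.2 ?_, hPM⟩) ?_
  · rw [UniqueFactorizationMonoid.mem_normalizedFactors_iff' hA]
    exact ⟨UniqueFactorizationMonoid.irreducible_of_normalized_factor P hP, normalize_eq P,
      Ideal.dvd_iff_le.2 (le_sup_right.trans hle)⟩
  · have : m ∈ (I ⊔ A) • (⊤ : Submodule D M) := hIA ▸ Submodule.mem_span_singleton_self m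
    exact Submodule.smul_mono_left hle this

/-- A faithful multiplication module over a domain is torsion-free. -/
theorem IsMultiplicationModule.eq_zero_or_eq_zero_of_smul {D M : Type*} [CommRing D]
    [IsDomain D] [AddCommGroup M] [Module D M] (hM : IsMultiplicationModule D M)
    (hA : Module.annihilator D M = ⊥) {a : D} {x : M} (h : a • x = 0) : a = 0 ∨ x = 0 := by
  obtain ⟨I, hI⟩ := hM (Submodule.span D {x})
  rw [or_iff_not_imp_left]
  intro ha
  have hI0 : I = ⊥ := by
    rw [eq_bot_iff]
    intro c hc
    have hac : a * c ∈ Module.annihilator D M := by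
      rw [Module.mem_annihilator]
      intro y
      have hy : c • y ∈ Submodule.span D {x} := hI ▸ Submodule.smul_mem_smul hc trivial
      obtain ⟨r, hr⟩ := Submodule.mem_span_singleton.1 hy
      rw [mul_smul, ← hr, smul_comm, h, smul_zero]
    rw [hA, Submodule.mem_bot] at hac
    exact (Submodule.mem_bot D).2 ((mul_eq_zero.1 hac).resolve_left ha)
  rwa [hI0, Submodule.bot_smul, Submodule.span_singleton_eq_bot] at hI

/-- Let `D` be a Dedekind domain and let `M` be a nonzero multiplication `D`-module. Then `M` is
isomorphic either to `D`, or to `D/I` for some nonzero proper ideal `I` of `D`, or to a nonzero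
ideal of `D`. -/
theorem multiplicationModule_over_dedekindDomain
    {D : Type u} [CommRing D] [IsDedekindDomain D]
    (M : Type v) [AddCommGroup M] [Module D M] [Nontrivial M]
    (hM : IsMultiplicationModule D M) :
    Nonempty (M ≃ₗ[D] D) ∨
      (∃ I : Ideal D, I ≠ ⊥ ∧ I ≠ ⊤ ∧ Nonempty (M ≃ₗ[D] (D ⧸ I))) ∨
      (∃ J : Ideal D, J ≠ ⊥ ∧ Nonempty (M ≃ₗ[D] J)) := by
  right
  by_cases hA : Module.annihilator D M = ⊥
  · right
    obtain ⟨x, hx⟩ := exists_ne (0 : M)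
    obtain ⟨I, hI⟩ := hM (Submodule.span D {x})
    have hI0 : I ≠ ⊥ := by
      rintro rfl
      rw [Submodule.bot_smul, Submodule.span_singleton_eq_bot] at hI
      exact hx hI
    obtain ⟨c, hc, hc0⟩ := Submodule.exists_mem_ne_zero_of_ne_bot hI0
    have hinj : Function.Injective (LinearMap.toSpanSingleton D M x) := by
      rw [← LinearMap.ker_eq_bot, LinearMap.ker_eq_bot']
      intro r hr
      exact (hM.eq_zero_or_eq_zero_of_smul hA hr).resolve_right hx
    have hmem : ∀ y : M, LinearMap.lsmul D M c y ∈ (LinearMap.toSpanSingleton D M x).range := by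
      intro y
      rw [LinearMap.range_toSpanSingleton, hI]
      exact Submodule.smul_mem_smul hc trivial
    -- `y ↦ r`, where `r` is the unique scalar with `c • y = r • x`.
    let f : M →ₗ[D] D := (LinearEquiv.ofInjective _ hinj).symm.toLinearMap ∘ₗ
      (LinearMap.lsmul D M c).codRestrict _ hmem
    have hf : Function.Injective f := by
      refine (LinearEquiv.ofInjective _ hinj).symm.injective.comp fun y z hyz => ?_
      have h : c • y = c • z := congrArg Subtype.val hyz
      rw [← sub_eq_zero, ← smul_sub] at h
      exact sub_eq_zero.1 ((hM.eq_zero_or_eq_zero_of_smul hA h).resolve_left hc0)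
    refine ⟨f.range, fun h => ?_, ⟨LinearEquiv.ofInjective f hf⟩⟩
    rw [LinearMap.range_eq_bot] at h
    exact hx (hf (by simp [h]))
  · left
    obtain ⟨m, hm⟩ := hM.exists_span_singleton_eq_top hA
    have hsurj : (LinearMap.toSpanSingleton D M m).range = ⊤ := by
      rw [LinearMap.range_toSpanSingleton, hm]
    refine ⟨(LinearMap.toSpanSingleton D M m).ker, fun h => hA ?_, fun h => ?_,
      ⟨(LinearMap.quotKerEquivOfSurjective _ (LinearMap.range_eq_top.1 hsurj)).symm⟩⟩
    · rw [eq_bot_iff, ← h]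
      intro a ha
      exact Module.mem_annihilator.1 ha m
    · rw [LinearMap.ker_eq_top] at h
      rw [h, LinearMap.range_zero] at hsurj
      exact bot_ne_top hsurj
end

section
/- Let D be an Artinian, local, principal ideal ring and let M be a nonzero multiplication D-module. Then M is cyclic; that is, M is isomorphic either to D or to D/I for some nonzero proper ideal I of D. -/
/-- Nakayama's lemma without finite generation: the maximal ideal is nilpotent. -/
theorem maximalIdeal_smul_top_ne_top {D : Type*} [CommRing D] [IsArtinianRing D] [IsLocalRing D]
    (M : Type*) [AddCommGroup M] [Module D M] [Nontrivial M] :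
    IsLocalRing.maximalIdeal D • (⊤ : Submodule D M) ≠ ⊤ := by
  intro h
  obtain ⟨n, hn⟩ := IsArtinianRing.isNilpotent_jacobson_bot (R := D)
  rw [IsLocalRing.jacobson_eq_maximalIdeal ⊥ bot_ne_top] at hn
  have key : ∀ k : ℕ, IsLocalRing.maximalIdeal D ^ k • (⊤ : Submodule D M) = ⊤ := by
    intro k
    induction k with
    | zero => simp
    | succ k ih => rw [pow_succ, Submodule.mul_smul, h, ih]
  have hbot := key n
  rw [hn, Ideal.zero_eq_bot, Submodule.bot_smul] at hbot
  exact bot_ne_top hbot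

/-- Let `D` be an Artinian, local, principal ideal ring and let `M` be a nonzero multiplication
`D`-module. Then `M` is cyclic; that is, `M` is isomorphic either to `D` or to `D/I` for some
nonzero proper ideal `I` of `D`. -/
theorem multiplicationModule_over_artinianLocalPIR_cyclic
    {D : Type u} [CommRing D] [IsArtinianRing D] [IsLocalRing D] [IsPrincipalIdealRing D]
    (M : Type v) [AddCommGroup M] [Module D M] [Nontrivial M]
    (hM : IsMultiplicationModule D M) :
    (∃ m : M, Submodule.span D {m} = ⊤) ∧
      (Nonempty (M ≃ₗ[D] D) ∨
        ∃ I : Ideal D, I ≠ ⊥ ∧ I ≠ ⊤ ∧ Nonempty (M ≃ₗ[D] (D ⧸ I))) := by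
  obtain ⟨x, -, hx⟩ :=
    SetLike.exists_of_lt (lt_top_iff_ne_top.mpr (maximalIdeal_smul_top_ne_top (D := D) M))
  have hspan : Submodule.span D {x} = ⊤ := by
    obtain ⟨I, hI⟩ := hM (Submodule.span D {x})
    have hItop : I = ⊤ := by
      by_contra hne
      apply hx
      have hxI : x ∈ I • (⊤ : Submodule D M) := hI ▸ Submodule.mem_span_singleton_self x
      exact Submodule.smul_mono_left (IsLocalRing.le_maximalIdeal hne) hxI
    rw [hI, hItop, Submodule.top_smul]
  refine ⟨⟨x, hspan⟩, ?_⟩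
  let f : D →ₗ[D] M := LinearMap.toSpanSingleton D M x
  have hsurj : Function.Surjective f := by
    rw [← LinearMap.range_eq_top, LinearMap.range_toSpanSingleton, hspan]
  by_cases hker : LinearMap.ker f = ⊥
  · exact Or.inl ⟨(LinearEquiv.ofBijective f ⟨LinearMap.ker_eq_bot.mp hker, hsurj⟩).symm⟩
  · refine Or.inr ⟨LinearMap.ker f, hker, fun htop => ?_,
      ⟨(f.quotKerEquivOfSurjective hsurj).symm⟩⟩
    have hf : f = 0 := LinearMap.ker_eq_top.mp htop
    have hx0 : x = 0 := by simpa [f] using LinearMap.congr_fun hf 1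
    exact hx (hx0 ▸ Submodule.zero_mem _)
end

section
/- Let D be an Artinian, local, principal ideal ring with maximal ideal 𝔪 and let M be a nonzero multiplication D-module. Then the set of submodules of M is exactly {M, 𝔪M, 𝔪²M, …, 𝔪^{μ}M, 𝔪^{μ+1}M = 0} for some natural number μ; in particular, M is a uniserial D-module (its submodules are totally ordered by inclusion). -/
open IsLocalRing in
/-- In a local ring whose maximal ideal `(p)` is nilpotent, every nonzero element is a unit times a
power of `p`, so a nonzero ideal is generated by the lowest power of `p` it contains. -/
theorem exists_eq_maximalIdeal_pow_of_pow_eq_bot {D : Type*} [CommRing D] [IsLocalRing D]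
    (hp : (maximalIdeal D).IsPrincipal) {n : ℕ} (hn : maximalIdeal D ^ n = ⊥) (I : Ideal D) :
    ∃ k ≤ n, I = maximalIdeal D ^ k := by
  classical
  by_cases hI : I ≤ maximalIdeal D ^ n
  · exact ⟨n, le_rfl, by rw [hn] at hI ⊢; exact le_bot_iff.mp hI⟩
  have hex : ∃ j, ¬ I ≤ maximalIdeal D ^ j := ⟨n, hI⟩
  have hspec := Nat.find_spec hex
  have hle := Nat.find_min' hex hI
  have hmin := fun j => Nat.find_min hex (m := j)
  -- The least `j` with `I` not contained in `𝔪 ^ j` is positive because `𝔪 ^ 0` is everything.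
  generalize Nat.find hex = j at hspec hle hmin
  obtain _ | k := j
  · simp at hspec
  have hk : I ≤ maximalIdeal D ^ k := not_not.mp (hmin k k.lt_succ_self)
  obtain ⟨p, hpm : maximalIdeal D = Ideal.span {p}⟩ := hp
  refine ⟨k, by omega, hk.antisymm ?_⟩
  obtain ⟨x, hxI, hx⟩ := SetLike.not_le_iff_exists.mp hspec
  have hxk := hk hxI
  rw [hpm, Ideal.span_singleton_pow, Ideal.mem_span_singleton] at hxk
  obtain ⟨a, rfl⟩ := hxk
  have ha : IsUnit a := by
    by_contra ha
    apply hx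
    rw [pow_succ]
    refine Ideal.mul_mem_mul (Ideal.pow_mem_pow ?_ k) ((mem_maximalIdeal a).mpr ha)
    rw [hpm]
    exact Ideal.mem_span_singleton_self p
  rw [hpm, Ideal.span_singleton_pow, Ideal.span_singleton_le_iff_mem]
  exact (I.mul_unit_mem_iff_mem ha).mp hxI

/-- Let `D` be an Artinian, local, principal ideal ring with maximal ideal `𝔪` and let `M` be a
nonzero multiplication `D`-module. Then the set of submodules of `M` is exactly
`{M, 𝔪M, 𝔪²M, …, 𝔪^μ M, 𝔪^{μ+1} M = 0}` for some natural number `μ`; in particular, `M` is a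
uniserial `D`-module (its submodules are totally ordered by inclusion). -/
theorem submodules_of_multiplicationModule_over_artinianLocalPIR
    {D : Type u} [CommRing D] [IsArtinianRing D] [IsLocalRing D] [IsPrincipalIdealRing D]
    (M : Type v) [AddCommGroup M] [Module D M] [Nontrivial M]
    (hM : IsMultiplicationModule D M) :
    (∃ μ : ℕ,
      (IsLocalRing.maximalIdeal D) ^ (μ + 1) • (⊤ : Submodule D M) = ⊥ ∧
      ∀ N : Submodule D M, ∃ k ≤ μ + 1,
        N = (IsLocalRing.maximalIdeal D) ^ k • (⊤ : Submodule D M)) ∧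
    ∀ N₁ N₂ : Submodule D M, N₁ ≤ N₂ ∨ N₂ ≤ N₁ := by
  obtain ⟨n, hn⟩ := IsArtinianRing.isNilpotent_jacobson_bot (R := D)
  rw [IsLocalRing.jacobson_eq_maximalIdeal _ bot_ne_top, Ideal.zero_eq_bot] at hn
  -- `n ≠ 0` since `𝔪 ^ 0 = D` is nonzero.
  obtain _ | μ := n
  · simp at hn
  have key : ∀ N : Submodule D M, ∃ k ≤ μ + 1,
      N = (IsLocalRing.maximalIdeal D) ^ k • (⊤ : Submodule D M) := by
    intro N
    obtain ⟨I, rfl⟩ := hM N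
    obtain ⟨k, hk, rfl⟩ := exists_eq_maximalIdeal_pow_of_pow_eq_bot
      (IsPrincipalIdealRing.principal _) hn I
    exact ⟨k, hk, rfl⟩
  refine ⟨⟨μ, by rw [hn, Submodule.bot_smul], key⟩, fun N₁ N₂ => ?_⟩
  obtain ⟨k, -, rfl⟩ := key N₁
  obtain ⟨l, -, rfl⟩ := key N₂
  rcases le_total k l with h | h
  · exact Or.inr (Submodule.smul_mono_left (Ideal.pow_le_pow_right h))
  · exact Or.inl (Submodule.smul_mono_left (Ideal.pow_le_pow_right h))
end

section
/- Let R be a commutative ring and let M be a finitely generated, faithful multiplication R-module. Then the map I ↦ IM from the lattice of ideals of R to the lattice of R-submodules of M is an isomorphism of lattices (in particular, it is an order-preserving bijection whose inverse is order-preserving). -/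
/-- A finitely generated faithful module `M` is only equal to `IM` for `I` the unit ideal. -/
theorem ideal_eq_top_of_top_le_smul_top {R : Type*} [CommRing R] {M : Type*} [AddCommGroup M]
    [Module R M] (hfg : Module.Finite R M) (hfaithful : Module.annihilator R M = ⊥)
    (I : Ideal R) (h : (⊤ : Submodule R M) ≤ I • (⊤ : Submodule R M)) : I = ⊤ := by
  obtain ⟨r, hr, hr0⟩ := Submodule.exists_sub_one_mem_and_smul_eq_zero_of_fg_of_le_smul I
    (⊤ : Submodule R M) hfg.fg_top h
  have hmem : r ∈ Module.annihilator R M := Module.mem_annihilator.2 fun x => hr0 x trivial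
  rw [hfaithful, Ideal.mem_bot] at hmem
  rw [Ideal.eq_top_iff_one]
  simpa [hmem] using hr

/-- If `pM ⊆ Rm` and `am ∈ JM`, then `p ^ 2 * a ∈ J`. -/
theorem sq_mul_mem_of_smul_mem_span {R : Type*} [CommRing R] {M : Type*} [AddCommGroup M]
    [Module R M] (hfaithful : Module.annihilator R M = ⊥) (J : Ideal R) {a p : R} {m : M}
    (hp : ∀ x : M, p • x ∈ Submodule.span R {m}) (ham : a • m ∈ J • (⊤ : Submodule R M)) :
    p ^ 2 * a ∈ J := by
  have hle : ∀ y ∈ J • (⊤ : Submodule R M), p • y ∈ J • Submodule.span R {m} := by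
    intro y hy
    induction hy using Submodule.smul_induction_on' with
    | smul r hr n _ =>
      rw [smul_comm]
      exact Submodule.smul_mem_smul hr (hp n)
    | add x _ y _ hx hy =>
      rw [smul_add]
      exact add_mem hx hy
  obtain ⟨j, hj, hjm⟩ := Submodule.mem_smul_span_singleton.1 (hle _ ham)
  have hzero : p * (p * a - j) ∈ Module.annihilator R M := by
    refine Module.mem_annihilator.2 fun x => ?_
    obtain ⟨c, hc⟩ := Submodule.mem_span_singleton.1 (hp x)
    rw [mul_comm, mul_smul, ← hc, smul_comm, sub_smul, hjm, mul_smul, sub_self, smul_zero]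
  rw [hfaithful, Ideal.mem_bot] at hzero
  have heq : p ^ 2 * a = p * j := by linear_combination hzero
  exact heq ▸ J.mul_mem_left p hj

/-- The cancellation law for finitely generated faithful multiplication modules. -/
theorem ideal_le_of_smul_top_le {R : Type*} [CommRing R] {M : Type*} [AddCommGroup M]
    [Module R M] (hfg : Module.Finite R M) (hfaithful : Module.annihilator R M = ⊥)
    (hM : IsMultiplicationModule R M) {I J : Ideal R}
    (h : I • (⊤ : Submodule R M) ≤ J • (⊤ : Submodule R M)) : I ≤ J := by
  intro a ha
  -- The colon ideal `(J : a)`.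
  let K : Ideal R := Submodule.comap (LinearMap.toSpanSingleton R R a) J
  have hK : ∀ r, r ∈ K ↔ r * a ∈ J := fun r => Iff.rfl
  have hrad : K.radical = ⊤ := by
    refine ideal_eq_top_of_top_le_smul_top hfg hfaithful _ fun m _ => ?_
    obtain ⟨L, hL⟩ := hM (Submodule.span R {m})
    have hLK : L ≤ K.radical := fun p hp => ⟨2, (hK _).2 <|
      sq_mul_mem_of_smul_mem_span hfaithful J
        (fun x => hL.ge (Submodule.smul_mem_smul hp trivial))
        (h (Submodule.smul_mem_smul ha trivial))⟩
    exact Submodule.smul_mono_left hLK (hL.le (Submodule.mem_span_singleton_self m))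
  have hone : (1 : R) ∈ K := (Ideal.eq_top_iff_one K).1 (Ideal.radical_eq_top.1 hrad)
  simpa using (hK 1).1 hone

/-- Let `R` be a commutative ring and let `M` be a finitely generated, faithful multiplication
`R`-module. Then the map `I ↦ IM` from the lattice of ideals of `R` to the lattice of
`R`-submodules of `M` is an isomorphism of lattices (in particular, it is an order-preserving
bijection whose inverse is order-preserving). -/
theorem ideal_lattice_orderIso_submodule_lattice
    {R : Type u} [CommRing R] (M : Type v) [AddCommGroup M] [Module R M]
    (hfg : Module.Finite R M) (hfaithful : Module.annihilator R M = ⊥)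
    (hM : IsMultiplicationModule R M) :
    ∃ e : Ideal R ≃o Submodule R M, ∀ I : Ideal R, e I = I • (⊤ : Submodule R M) := by
  have hemb : ∀ I J : Ideal R,
      I • (⊤ : Submodule R M) ≤ J • (⊤ : Submodule R M) ↔ I ≤ J := fun I J =>
    ⟨ideal_le_of_smul_top_le hfg hfaithful hM, fun h => Submodule.smul_mono_left h⟩
  let f : Ideal R ↪o Submodule R M :=
    OrderEmbedding.ofMapLEIff (fun I => I • (⊤ : Submodule R M)) hemb
  have hsurj : Function.Surjective f := fun N => (hM N).imp fun _ hI => hI.symm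
  exact ⟨RelIso.ofSurjective f hsurj, fun _ => rfl⟩
end

section
/- (Cancellation Law) Let R be a commutative ring and let M be a finitely generated, faithful multiplication R-module. Then for any two ideals A and B of R, AM ⊆ BM if and only if A ⊆ B. -/
/-- A finitely generated faithful multiplication module is cyclic up to a multiplier outside any
given maximal ideal. -/
theorem IsMultiplicationModule.exists_smul_mem_span_singleton
    {R M : Type*} [CommRing R] [AddCommGroup M] [Module R M]
    (hfg : Module.Finite R M) (hfaithful : Module.annihilator R M = ⊥)
    (hM : IsMultiplicationModule R M) (P : Ideal R) (hP : P.IsMaximal) :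
    ∃ q ∉ P, ∃ m : M, ∀ x : M, q • x ∈ Submodule.span R {m} := by
  have hne : ¬ (⊤ : Submodule R M) ≤ P • ⊤ := by
    intro h
    obtain ⟨r, hr, hr0⟩ := Submodule.exists_sub_one_mem_and_smul_eq_zero_of_fg_of_le_smul P
      (⊤ : Submodule R M) hfg.fg_top h
    have hrA : r ∈ Module.annihilator R M :=
      Module.mem_annihilator.2 fun x => hr0 x trivial
    rw [hfaithful, Ideal.mem_bot] at hrA
    subst hrA
    exact hP.ne_top ((Ideal.eq_top_iff_one P).2 (by simpa using hr))
  obtain ⟨m, -, hm⟩ := SetLike.not_le_iff_exists.1 hne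
  obtain ⟨I, hI⟩ := hM (Submodule.span R {m})
  have hIP : ¬ I ≤ P := fun h =>
    hm (Submodule.smul_mono_left h (hI ▸ Submodule.mem_span_singleton_self m))
  obtain ⟨q, hqI, hqP⟩ := SetLike.not_le_iff_exists.1 hIP
  exact ⟨q, hqP, m, fun x => hI ▸ Submodule.smul_mem_smul hqI trivial⟩

/-- (Cancellation Law) Let `R` be a commutative ring and let `M` be a finitely generated,
faithful multiplication `R`-module. Then for any two ideals `A` and `B` of `R`, `AM ⊆ BM` if and
only if `A ⊆ B`. -/
theorem cancellation_law_of_faithful_multiplicationModule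
    {R : Type u} [CommRing R] (M : Type v) [AddCommGroup M] [Module R M]
    (hfg : Module.Finite R M) (hfaithful : Module.annihilator R M = ⊥)
    (hM : IsMultiplicationModule R M) (A B : Ideal R) :
    A • (⊤ : Submodule R M) ≤ B • (⊤ : Submodule R M) ↔ A ≤ B := by
  refine ⟨fun h a ha => ?_, fun h => Submodule.smul_mono_left h⟩
  -- the colon ideal `(B : a)`
  let K : Ideal R := Submodule.comap (LinearMap.mulRight R a) B
  have hK : ∀ r, r ∈ K ↔ r * a ∈ B := fun r => Iff.rfl
  suffices hKtop : K = ⊤ by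
    simpa using (hK 1).1 (hKtop ▸ trivial)
  by_contra hKne
  obtain ⟨P, hP, hKP⟩ := Ideal.exists_le_maximal K hKne
  obtain ⟨q, hqP, m, hq⟩ := hM.exists_smul_mem_span_singleton hfg hfaithful P hP
  have hqB : ∀ x ∈ B • (⊤ : Submodule R M), q • x ∈ B • Submodule.span R {m} := by
    intro x hx
    induction hx using Submodule.smul_induction_on' with
    | smul b hb n hn =>
      rw [smul_comm]
      exact Submodule.smul_mem_smul hb (hq n)
    | add x hx y hy ihx ihy =>
      rw [smul_add]
      exact add_mem ihx ihy
  obtain ⟨b, hb, hbm⟩ := Submodule.mem_smul_span_singleton.1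
    (hqB (a • m) (h (Submodule.smul_mem_smul ha trivial)))
  have hann : (q * a - b) * q ∈ Module.annihilator R M := by
    refine Module.mem_annihilator.2 fun x => ?_
    obtain ⟨c, hc⟩ := Submodule.mem_span_singleton.1 (hq x)
    rw [mul_smul, ← hc, smul_comm, sub_smul, mul_smul, hbm, sub_self, smul_zero]
  rw [hfaithful, Ideal.mem_bot] at hann
  have hqq : q * q ∈ K := by
    rw [hK, show q * q * a = q * b by linear_combination hann]
    exact B.mul_mem_left q hb
  exact hqP ((hP.isPrime.mem_or_mem (hKP hqq)).elim id id)
end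

section
/- Let R be a commutative ring and let M be a finitely generated R-module. Then M is a multiplication R-module if and only if for every maximal ideal 𝔭 of R the localized R_𝔭-module M_𝔭 is a multiplication R_𝔭-module. -/
/-- Clearing denominators: if a finitely generated submodule `K` localizes into `N_S`, then a single
element of `S` multiplies `K` into `N`. -/
theorem exists_smul_mem_of_fg_of_localized_le {R : Type*} {M : Type*} [CommRing R]
    [AddCommGroup M] [Module R M] (S : Submonoid R) (N K : Submodule R M) (hK : K.FG)
    (h : ∀ m ∈ K, LocalizedModule.mkLinearMap S M m ∈ N.localized S) :
    ∃ s ∈ S, ∀ m ∈ K, s • m ∈ N := by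
  induction K, hK using Submodule.fg_induction with
  | singleton x =>
    obtain ⟨n, hn, t, e⟩ := h x (Submodule.mem_span_singleton_self x)
    rw [← IsLocalizedModule.mk'_one S, IsLocalizedModule.mk'_eq_mk'_iff] at e
    obtain ⟨c, hc⟩ := e
    have hx : ((c : R) * t) • x ∈ N := by
      have h2 : (c : R) • (t : R) • x ∈ N := by
        have h3 := N.smul_mem (c : R) hn
        simp only [Submonoid.smul_def, one_smul] at hc
        simpa [hc] using h3
      rwa [mul_smul]
    refine ⟨c * t, S.mul_mem c.2 t.2, fun m hm ↦ ?_⟩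
    obtain ⟨a, rfl⟩ := Submodule.mem_span_singleton.mp hm
    rw [smul_comm]
    exact N.smul_mem a hx
  | sup K₁ K₂ _ _ h₁ h₂ =>
    obtain ⟨s, hs, hs'⟩ := h₁ fun m hm ↦ h m (Submodule.mem_sup_left hm)
    obtain ⟨t, ht, ht'⟩ := h₂ fun m hm ↦ h m (Submodule.mem_sup_right hm)
    refine ⟨s * t, S.mul_mem hs ht, fun m hm ↦ ?_⟩
    obtain ⟨x, hx, y, hy, rfl⟩ := Submodule.mem_sup.mp hm
    rw [smul_add]
    refine N.add_mem ?_ ?_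
    · rw [mul_comm, mul_smul]
      exact N.smul_mem t (hs' x hx)
    · rw [mul_smul]
      exact N.smul_mem s (ht' y hy)

theorem IsMultiplicationModule.localizedModule {R : Type*} {M : Type*} [CommRing R]
    [AddCommGroup M] [Module R M] (h : IsMultiplicationModule R M) (S : Submonoid R) :
    IsMultiplicationModule (Localization S) (LocalizedModule S M) := by
  intro N'
  let gi := Submodule.localized'gi (Localization S) S (LocalizedModule.mkLinearMap S M)
  obtain ⟨I, hI⟩ := h ((N'.restrictScalars R).comap (LocalizedModule.mkLinearMap S M))
  refine ⟨Submodule.localized' (Localization S) S (Algebra.linearMap R (Localization S)) I, ?_⟩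
  rw [← gi.l_u_eq N', ← Submodule.localized'_top (Localization S) S
    (LocalizedModule.mkLinearMap S M), ← Submodule.localized'_smul]
  exact congrArg _ hI

/-- If `M` is finitely generated and `M_S` is a multiplication module, then the nontrivial inclusion
in `N = (N : M) • M` holds after localizing at `S`. -/
theorem localized_le_localized_colon_smul_top {R : Type*} {M : Type*} [CommRing R]
    [AddCommGroup M] [Module R M] [Module.Finite R M] (S : Submonoid R)
    (h : IsMultiplicationModule (Localization S) (LocalizedModule S M)) (N : Submodule R M) :
    N.localized S ≤ (N.colon Set.univ • (⊤ : Submodule R M)).localized S := by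
  obtain ⟨J, hJ⟩ := h (N.localized S)
  rw [hJ, Submodule.localized, Submodule.localized'_smul, Submodule.localized'_top]
  refine Submodule.smul_mono_left fun j hj ↦ ?_
  obtain ⟨r, t, rfl⟩ := IsLocalization.exists_mk'_eq S j
  have hr : algebraMap R (Localization S) r ∈ J := by
    rw [← IsLocalization.mk'_spec (Localization S) r t]
    exact J.mul_mem_right _ hj
  obtain ⟨s, hs, hs'⟩ := exists_smul_mem_of_fg_of_localized_le S N
    ((⊤ : Submodule R M).map (r • LinearMap.id)) (Module.Finite.fg_top.map _) (by
      rintro _ ⟨m, -, rfl⟩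
      rw [hJ, LinearMap.smul_apply, LinearMap.id_apply, map_smul,
        ← algebraMap_smul (Localization S)]
      exact Submodule.smul_mem_smul hr trivial)
  refine ⟨s * r, ?_, ⟨s, hs⟩ * t, ?_⟩
  · rw [Submodule.mem_colon]
    intro m _
    rw [mul_smul]
    exact hs' _ ⟨m, trivial, rfl⟩
  · rw [IsLocalization.mk'_eq_mk']
    exact IsLocalizedModule.mk'_cancel_left (Algebra.linearMap R (Localization S)) r (⟨s, hs⟩ : S) t

/-- Let `R` be a commutative ring and let `M` be a finitely generated `R`-module. Then `M` is a
multiplication `R`-module if and only if for every maximal ideal `𝔭` of `R` the localized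
`R_𝔭`-module `M_𝔭` is a multiplication `R_𝔭`-module. -/
theorem isMultiplicationModule_iff_localized_at_maximal
    {R : Type u} [CommRing R] (M : Type v) [AddCommGroup M] [Module R M]
    (hfg : Module.Finite R M) :
    IsMultiplicationModule R M ↔
      ∀ (P : Ideal R) (_ : P.IsMaximal),
        IsMultiplicationModule (Localization.AtPrime P)
          (LocalizedModule P.primeCompl M) := by
  refine ⟨fun h P _ ↦ h.localizedModule P.primeCompl, fun h N ↦ ⟨N.colon Set.univ, ?_⟩⟩
  refine le_antisymm ?_ (Submodule.smul_le.mpr fun r hr m _ ↦ Submodule.mem_colon.mp hr m trivial)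
  exact Submodule.le_of_localization_maximal _ (fun P _ ↦ LocalizedModule.mkLinearMap P.primeCompl M)
    fun P hP ↦ localized_le_localized_colon_smul_top P.primeCompl (h P hP) N
end

section
/- Let R be a commutative ring and let M be a Noetherian distributive R-module. Then every submodule N of M that is locally nonzero at every maximal ideal of R (i.e., N_𝔪 ≠ 0 for every maximal ideal 𝔪 of R) is of the form N = IM where I is a product of maximal ideals of R. -/
/-- The distributive law for `R x`, `R y` and `R (x + y)` makes `R x` and `R y` comparable up to
complementary scalars. -/
lemma IsDistributiveModule.exists_smul_mem_span {R M : Type*} [CommRing R] [AddCommGroup M]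
    [Module R M] (hdist : IsDistributiveModule R M) (x y : M) :
    ∃ a : R, a • x ∈ Submodule.span R {y} ∧ (1 - a) • y ∈ Submodule.span R {x} := by
  have h : x + y ∈ (Submodule.span R {x} ⊔ Submodule.span R {y}) ⊓ Submodule.span R {x + y} :=
    ⟨Submodule.add_mem_sup (Submodule.mem_span_singleton_self x)
      (Submodule.mem_span_singleton_self y), Submodule.mem_span_singleton_self _⟩
  rw [hdist, Submodule.mem_sup] at h
  obtain ⟨u, ⟨hux, huxy⟩, v, ⟨hvy, -⟩, huv⟩ := h
  -- If `u = α (x + y)`, then `v = (1 - α) (x + y)`, and `a = 1 - α` works.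
  obtain ⟨α, rfl⟩ := Submodule.mem_span_singleton.1 huxy
  refine ⟨1 - α, ?_, ?_⟩
  · have : (1 - α) • x = v - (1 - α) • y := by
      rw [eq_sub_of_add_eq' huv]; module
    rw [this]
    exact sub_mem hvy (Submodule.smul_mem _ _ (Submodule.mem_span_singleton_self y))
  · have : (1 - (1 - α)) • y = α • (x + y) - α • x := by module
    rw [this]
    exact sub_mem hux (Submodule.smul_mem _ _ (Submodule.mem_span_singleton_self x))

/-- A finitely generated submodule of a distributive module is cyclic locally at a prime `P`. -/
lemma exists_notMem_smul_mem_span {R M : Type*} [CommRing R] [AddCommGroup M] [Module R M]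
    (hdist : IsDistributiveModule R M) (P : Ideal R) [P.IsPrime] (K : Submodule R M)
    (hK : K.FG) : ∃ x ∈ K, ∃ s ∉ P, ∀ m ∈ K, s • m ∈ Submodule.span R {x} := by
  induction K, hK using Submodule.fg_induction with
  | singleton x =>
    exact ⟨x, Submodule.mem_span_singleton_self x, 1, P.one_notMem, fun m hm => by simpa using hm⟩
  | sup K₁ K₂ _ _ h₁ h₂ =>
    obtain ⟨x, hx, s, hs, hsx⟩ := h₁
    obtain ⟨y, hy, t, ht, hty⟩ := h₂
    obtain ⟨a, hax, hay⟩ := hdist.exists_smul_mem_span x y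
    have hst : s * t ∉ P := Ideal.IsPrime.mul_notMem ‹_› hs ht
    by_cases ha : a ∈ P
    · have hb : 1 - a ∉ P := fun hb => P.one_notMem (by simpa using add_mem hb ha)
      refine ⟨x, Submodule.mem_sup_left hx, (1 - a) * (s * t),
        Ideal.IsPrime.mul_notMem ‹_› hb hst, fun m hm => ?_⟩
      obtain ⟨m₁, hm₁, m₂, hm₂, rfl⟩ := Submodule.mem_sup.1 hm
      obtain ⟨c, hc⟩ := Submodule.mem_span_singleton.1 (hty m₂ hm₂)
      have : ((1 - a) * (s * t)) • (m₁ + m₂)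
          = ((1 - a) * t) • s • m₁ + (s * c) • (1 - a) • y := by
        linear_combination (norm := module) (-((1 - a) * s)) • hc
      rw [this]
      exact add_mem (Submodule.smul_mem _ _ (hsx m₁ hm₁)) (Submodule.smul_mem _ _ hay)
    · refine ⟨y, Submodule.mem_sup_right hy, a * (s * t),
        Ideal.IsPrime.mul_notMem ‹_› ha hst, fun m hm => ?_⟩
      obtain ⟨m₁, hm₁, m₂, hm₂, rfl⟩ := Submodule.mem_sup.1 hm
      obtain ⟨c, hc⟩ := Submodule.mem_span_singleton.1 (hsx m₁ hm₁)
      have : (a * (s * t)) • (m₁ + m₂) = (a * s) • t • m₂ + (t * c) • a • x := by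
        linear_combination (norm := module) (-(a * t)) • hc
      rw [this]
      exact add_mem (Submodule.smul_mem _ _ (hty m₂ hm₂)) (Submodule.smul_mem _ _ hax)

/-- Membership in `L` may be tested after multiplying by some `s ∉ P`, as soon as `P m ⊆ L`:
away from `P` the latter already gives `m ∈ L`. -/
lemma mem_of_smul_mem_of_notMem {R M : Type*} [CommRing R] [AddCommGroup M] [Module R M]
    {P : Ideal R} (hP : P.IsMaximal) {L : Submodule R M} {m : M} {s : R}
    (hPm : ∀ q ∈ P, q • m ∈ L) (hs : s ∉ P) (hsm : s • m ∈ L) : m ∈ L := by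
  obtain ⟨b, q, hq, h⟩ := hP.exists_inv hs
  have : m = b • s • m + q • m := by rw [smul_smul, ← add_smul, h, one_smul]
  rw [this]
  exact add_mem (L.smul_mem _ hsm) (hPm q hq)

lemma exists_isMaximal_le_smul_top {R M : Type*} [CommRing R] [AddCommGroup M] [Module R M]
    [IsNoetherian R M] (hdist : IsDistributiveModule R M) (N : Submodule R M) (hN : N ≠ ⊤) :
    ∃ P : Ideal R, P.IsMaximal ∧ N ≤ P • (⊤ : Submodule R M) := by
  obtain ⟨m, hm⟩ : ∃ m, m ∉ N := by
    by_contra! h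
    exact hN (eq_top_iff.2 fun x _ => h x)
  let J : Ideal R := N.comap (LinearMap.toSpanSingleton R M m)
  have hJ : ∀ r, r ∈ J ↔ r • m ∈ N := fun r => Iff.rfl
  have hJ1 : J ≠ ⊤ := fun h => hm (by simpa using (hJ 1).1 (h ▸ Submodule.mem_top))
  obtain ⟨P, hP, hJP⟩ := J.exists_le_maximal hJ1
  have := hP.isPrime
  refine ⟨P, hP, fun n hn => ?_⟩
  obtain ⟨x, -, s, hs, hsx⟩ := exists_notMem_smul_mem_span hdist P ⊤ (IsNoetherian.noetherian _)
  refine mem_of_smul_mem_of_notMem hP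
    (fun q hq => Submodule.smul_mem_smul hq Submodule.mem_top) hs ?_
  obtain ⟨r, hr⟩ := Submodule.mem_span_singleton.1 (hsx n Submodule.mem_top)
  obtain ⟨c, hc⟩ := Submodule.mem_span_singleton.1 (hsx m Submodule.mem_top)
  -- If `r ∉ P`, then `x`, hence `m`, would lie in `N` locally at `P`.
  have hrP : r ∈ P := by
    by_contra hrP
    refine Ideal.IsPrime.mul_notMem ‹_› hrP hs (hJP ((hJ _).2 ?_))
    have : (r * s) • m = (c * s) • n := by
      linear_combination (norm := module) (-r) • hc + c • hr
    rw [this]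
    exact N.smul_mem _ hn
  rw [← hr]
  exact Submodule.smul_mem_smul hrP Submodule.mem_top

/-- The submodule `(N : P) = {x | P x ⊆ N}` of `M`. -/
def colonBy {R M : Type*} [CommRing R] [AddCommGroup M] [Module R M] (N : Submodule R M)
    (P : Ideal R) : Submodule R M where
  carrier := {x | ∀ q ∈ P, q • x ∈ N}
  zero_mem' q _ := by simp
  add_mem' hx hy q hq := by
    rw [smul_add]
    exact add_mem (hx q hq) (hy q hq)
  smul_mem' c x hx q hq := by
    rw [smul_comm]
    exact N.smul_mem c (hx q hq)

lemma le_colonBy {R M : Type*} [CommRing R] [AddCommGroup M] [Module R M] (N : Submodule R M)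
    (P : Ideal R) : N ≤ colonBy N P :=
  fun _ hx q _ => N.smul_mem q hx

/-- Locally at `P`, the submodule `P M` is `p M` for a single `p ∈ P`, so any `N ≤ P M` is
divisible by `P`. -/
lemma smul_colonBy_eq {R M : Type*} [CommRing R] [AddCommGroup M] [Module R M]
    [IsNoetherian R M] (hdist : IsDistributiveModule R M) (N : Submodule R M) (P : Ideal R)
    (hP : P.IsMaximal) (hN : N ≤ P • (⊤ : Submodule R M)) : P • colonBy N P = N := by
  have := hP.isPrime
  refine le_antisymm (Submodule.smul_le.2 fun q hq x hx => hx q hq) fun n hn => ?_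
  obtain ⟨x, -, s, hs, hsx⟩ := exists_notMem_smul_mem_span hdist P ⊤ (IsNoetherian.noetherian _)
  obtain ⟨y, hy, t, ht, hty⟩ := exists_notMem_smul_mem_span hdist P (P • (⊤ : Submodule R M))
    (IsNoetherian.noetherian _)
  -- The local generator `y` of `P M` is locally a multiple `p x` with `p ∈ P`.
  obtain ⟨p, hp, hpx⟩ : ∃ p ∈ P, p • x = s • y := by
    refine Submodule.smul_induction_on hy (fun q hq m _ => ?_) ?_
    · obtain ⟨c, hc⟩ := Submodule.mem_span_singleton.1 (hsx m Submodule.mem_top)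
      exact ⟨q * c, P.mul_mem_right c hq, by rw [mul_smul, hc, smul_comm]⟩
    · rintro y₁ y₂ ⟨p₁, hp₁, h₁⟩ ⟨p₂, hp₂, h₂⟩
      exact ⟨p₁ + p₂, add_mem hp₁ hp₂, by rw [add_smul, smul_add, h₁, h₂]⟩
  obtain ⟨c, hc⟩ := Submodule.mem_span_singleton.1 (hty n (hN hn))
  have hst : s * t ∉ P := Ideal.IsPrime.mul_notMem ‹_› hs ht
  -- Locally `n = p (c x)`, where `c x` lies in `(N : P)` up to the factor `s t`.
  have hz : (s * t * c) • x ∈ colonBy N P := by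
    intro q hq
    obtain ⟨d, hd⟩ := Submodule.mem_span_singleton.1
      (hty (q • x) (Submodule.smul_mem_smul hq Submodule.mem_top))
    have : q • (s * t * c) • x = (d * s * t) • n := by
      linear_combination (norm := module) (-(s * c)) • hd + (d * s) • hc
    rw [this]
    exact N.smul_mem _ hn
  refine mem_of_smul_mem_of_notMem hP
    (fun q hq => Submodule.smul_mem_smul hq (le_colonBy N P hn))
    (Ideal.IsPrime.mul_notMem ‹_› hst hst) ?_
  have : (s * t * (s * t)) • n = p • (s * t * c) • x := by
    linear_combination (norm := module) (-(s * t * s)) • hc + (-(s * t * c)) • hpx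
  rw [this]
  exact Submodule.smul_mem_smul hp hz

/-- The induction proper; the local condition is phrased by elements: no `r ∉ P` kills `N`. -/
lemma exists_prod_maximal_smul_of_smul_ne_zero {R M : Type*} [CommRing R] [AddCommGroup M]
    [Module R M] [IsNoetherian R M] (hdist : IsDistributiveModule R M) (N : Submodule R M)
    (hloc : ∀ P : Ideal R, P.IsMaximal → ∀ r ∉ P, ∃ n ∈ N, r • n ≠ 0) :
    ∃ s : Multiset (Ideal R), (∀ J ∈ s, J.IsMaximal) ∧
      N = s.prod • (⊤ : Submodule R M) := by
  induction N using WellFoundedGT.induction with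
  | ind N ih =>
  by_cases hN : N = ⊤
  · exact ⟨0, by simp, by simp [hN]⟩
  obtain ⟨P, hP, hNP⟩ := exists_isMaximal_le_smul_top hdist N hN
  have heq := smul_colonBy_eq hdist N P hP hNP
  have hlt : N < colonBy N P := by
    refine lt_of_le_of_ne (le_colonBy N P) fun h => ?_
    -- Otherwise `N = P N`, and Nakayama kills `N` locally at `P`.
    rw [← h] at heq
    obtain ⟨r, hr1, hr⟩ := Submodule.exists_sub_one_mem_and_smul_eq_zero_of_fg_of_le_smul P N
      (IsNoetherian.noetherian N) heq.ge
    have hrP : r ∉ P := fun hrP =>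
      hP.ne_top ((Ideal.eq_top_iff_one P).2 (by simpa using sub_mem hrP hr1))
    obtain ⟨n, hn, hne⟩ := hloc P hP r hrP
    exact hne (hr n hn)
  obtain ⟨s, hs, hsN⟩ := ih _ hlt fun Q hQ r hr => by
    obtain ⟨n, hn, hne⟩ := hloc Q hQ r hr
    exact ⟨n, le_colonBy N P hn, hne⟩
  refine ⟨P ::ₘ s, ?_, ?_⟩
  · simpa using ⟨hP, hs⟩
  · rw [Multiset.prod_cons, ← smul_eq_mul, Submodule.smul_assoc, ← hsN, heq]

/-- Let `R` be a commutative ring and let `M` be a Noetherian distributive `R`-module. Then every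
submodule `N` of `M` that is locally nonzero at every maximal ideal of `R` (i.e. `N_𝔪 ≠ 0` for
every maximal ideal `𝔪` of `R`) is of the form `N = IM` where `I` is a product of maximal ideals
of `R`. -/
theorem locallyNonzero_submodule_eq_prod_maximal_smul
    {R : Type u} [CommRing R] (M : Type v) [AddCommGroup M] [Module R M]
    [IsNoetherian R M] (hdist : IsDistributiveModule R M)
    (N : Submodule R M)
    (hloc : ∀ (P : Ideal R) (_ : P.IsMaximal), N.localized P.primeCompl ≠ ⊥) :
    ∃ s : Multiset (Ideal R), (∀ J ∈ s, J.IsMaximal) ∧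
      N = s.prod • (⊤ : Submodule R M) := by
  refine exists_prod_maximal_smul_of_smul_ne_zero hdist N fun P hP r hr => ?_
  by_contra! h
  refine hloc P hP (eq_bot_iff.2 ?_)
  rintro _ ⟨n, hn, t, rfl⟩
  rw [Submodule.mem_bot, IsLocalizedModule.mk'_eq_zero']
  exact ⟨⟨r, hr⟩, h n hn⟩
end

section
/- Let R be a multiplication ring. Then R has only finitely many minimal prime ideals if and only if R is a Noetherian ring. -/
/-- If `P = P * A` in a multiplication ring, then each element of `P` is fixed by multiplication
by some element of `A`: multiplying the equality by `J`, where `(x) = J * P`, gives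
`(x) = (x) * A`. -/
lemma IsMultiplicationRing.exists_mul_eq_self {R : Type*} [CommRing R]
    (hR : IsMultiplicationRing R) {P A : Ideal R} (h : P ≤ P * A) {x : R} (hx : x ∈ P) :
    ∃ a ∈ A, x * a = x := by
  obtain ⟨J, hJ⟩ := hR P (Ideal.span {x}) ((Ideal.span_singleton_le_iff_mem P).2 hx)
  have hle : Ideal.span {x} ≤ Ideal.span {x} * A := by
    conv_lhs => rw [hJ]
    rw [hJ, mul_assoc]
    exact Ideal.mul_mono_right h
  exact Ideal.mem_span_singleton_mul.1 (hle (Ideal.mem_span_singleton_self x))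

/-- If `x * a = x` with `a` in the proper ideal `N`, then `1 - a` kills `x` and is not in `N`. -/
lemma exists_notMem_mul_eq_zero_of_mul_eq_self {R : Type*} [CommRing R] {N : Ideal R}
    (hN : N ≠ ⊤) {x a : R} (ha : a ∈ N) (hxa : x * a = x) : ∃ s ∉ N, s * x = 0 := by
  refine ⟨1 - a, fun h => hN ((Ideal.eq_top_iff_one N).2 ?_), by linear_combination -hxa⟩
  simpa using N.add_mem h ha

/-- A prime `Q` strictly contained in a proper ideal `N` vanishes at `N`: writing `Q = I * N`,
primality gives `I ≤ Q`, so `Q = Q * N`. -/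
lemma IsMultiplicationRing.exists_notMem_mul_eq_zero_of_lt {R : Type*} [CommRing R]
    (hR : IsMultiplicationRing R) {Q N : Ideal R} (hQ : Q.IsPrime) (hN : N ≠ ⊤) (hlt : Q < N)
    {x : R} (hx : x ∈ Q) : ∃ s ∉ N, s * x = 0 := by
  obtain ⟨I, hI⟩ := hR N Q hlt.le
  have hIQ : I ≤ Q := (hQ.mul_le.1 hI.ge).resolve_right hlt.not_ge
  have hQN : Q ≤ Q * N := by
    conv_lhs => rw [hI]
    exact Ideal.mul_mono_left hIQ
  obtain ⟨a, ha, hxa⟩ := hR.exists_mul_eq_self hQN hx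
  exact exists_notMem_mul_eq_zero_of_mul_eq_self hN ha hxa

/-- An element of a minimal prime `Q` is nilpotent at `Q`: otherwise the submonoid of products
`s * t ^ k` with `s ∉ Q` avoids `0`, hence also some prime, which is strictly inside `Q`. -/
lemma exists_notMem_mul_pow_eq_zero {R : Type*} [CommRing R] {Q : Ideal R}
    (hQ : Q ∈ minimalPrimes R) {t : R} (ht : t ∈ Q) : ∃ k : ℕ, ∃ s ∉ Q, s * t ^ k = 0 := by
  have hQp : Q.IsPrime := hQ.1.1
  by_contra! h
  have hdis : Disjoint ((⊥ : Ideal R) : Set R)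
      (↑(Q.primeCompl ⊔ Submonoid.powers t) : Set R) := by
    rw [Set.disjoint_left]
    rintro a ha has
    obtain ⟨s, hs, _, ⟨k, rfl⟩, rfl⟩ := Submonoid.mem_sup.1 has
    exact h k s hs ha
  obtain ⟨p, hp, -, hpd⟩ := Ideal.exists_le_prime_disjoint _ _ hdis
  have hpQ : p ≤ Q := fun a ha => by
    by_contra haQ
    exact Set.disjoint_left.1 hpd ha (Submonoid.mem_sup_left (S := Q.primeCompl) haQ)
  exact Set.disjoint_left.1 hpd (hQ.2 ⟨hp, bot_le⟩ hpQ ht)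
    (Submonoid.mem_sup_right (Submonoid.mem_powers t))

/-- The ideal of all `r` such that `r * P` lies in a finitely generated subideal of `P`. -/
def fgMultiplier {R : Type*} [CommRing R] (P : Ideal R) : Ideal R where
  carrier := {r | ∃ I : Ideal R, I.FG ∧ I ≤ P ∧ ∀ p ∈ P, r * p ∈ I}
  zero_mem' := ⟨⊥, Submodule.fg_bot, bot_le, by simp⟩
  add_mem' := by
    rintro a b ⟨I, hI, hIP, ha⟩ ⟨J, hJ, hJP, hb⟩
    refine ⟨I ⊔ J, Submodule.FG.sup hI hJ, sup_le hIP hJP, fun p hp => ?_⟩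
    rw [add_mul]
    exact Submodule.add_mem_sup (ha p hp) (hb p hp)
  smul_mem' := by
    rintro c a ⟨I, hI, hIP, ha⟩
    refine ⟨I, hI, hIP, fun p hp => ?_⟩
    rw [smul_eq_mul, mul_assoc]
    exact I.mul_mem_left c (ha p hp)

lemma fg_of_fgMultiplier_eq_top {R : Type*} [CommRing R] {P : Ideal R}
    (h : fgMultiplier P = ⊤) : P.FG := by
  obtain ⟨I, hI, hIP, h1⟩ := (Ideal.eq_top_iff_one _).1 h
  have : I = P := le_antisymm hIP fun p hp => by simpa using h1 p hp
  exact this ▸ hI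

lemma IsMultiplicationRing.le_mul_fgMultiplier {R : Type*} [CommRing R]
    (hR : IsMultiplicationRing R) (P : Ideal R) : P ≤ P * fgMultiplier P := by
  intro x hx
  have hxP := (Ideal.span_singleton_le_iff_mem P).2 hx
  obtain ⟨J, hJ⟩ := hR P (Ideal.span {x}) hxP
  have hJθ : J ≤ fgMultiplier P := fun j hj =>
    ⟨Ideal.span {x}, Submodule.fg_span_singleton x, hxP, fun p hp => hJ ▸ Ideal.mul_mem_mul hj hp⟩
  rw [mul_comm]
  exact Ideal.mul_mono_left hJθ (hJ ▸ Ideal.mem_span_singleton_self x)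

lemma IsMultiplicationRing.fg_of_isPrime {R : Type*} [CommRing R]
    (hR : IsMultiplicationRing R) (hfin : (minimalPrimes R).Finite) (P : Ideal R)
    (hP : P.IsPrime) : P.FG := by
  by_contra hfg
  obtain ⟨M, hM, hθM⟩ := Ideal.exists_le_maximal (fgMultiplier P)
    fun h => hfg (fg_of_fgMultiplier_eq_top h)
  have hPM0 : ∀ x ∈ P, ∃ s ∉ M, s * x = 0 := fun x hx => by
    obtain ⟨a, ha, hxa⟩ := hR.exists_mul_eq_self (hR.le_mul_fgMultiplier P) hx
    exact exists_notMem_mul_eq_zero_of_mul_eq_self hM.ne_top (hθM ha) hxa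
  have hP_le : ∀ Q : Ideal R, Q.IsPrime → Q ≤ M → P ≤ Q := fun Q hQ hQM x hx => by
    obtain ⟨s, hs, hsx⟩ := hPM0 x hx
    exact (hQ.mem_or_mem (hsx ▸ Q.zero_mem : s * x ∈ Q)).resolve_left fun h => hs (hQM h)
  have hPM : P ≤ M := hP_le M hM.isPrime le_rfl
  obtain ⟨t, ht, htM⟩ : ∃ t, (∀ Q ∈ minimalPrimes R, Q ≠ P → t ∈ Q) ∧ t ∉ M := by
    classical
    by_contra! h
    have hinf : (hfin.toFinset.erase P).inf id ≤ M := fun t ht => by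
      refine h t fun Q hQ hQP => ?_
      exact Finset.inf_le (f := id)
        (Finset.mem_erase.2 ⟨hQP, hfin.mem_toFinset.2 hQ⟩) ht
    obtain ⟨Q, hQ, hQM⟩ := (Ideal.IsPrime.inf_le' hM.isPrime).1 hinf
    obtain ⟨hQP, hQ⟩ := Finset.mem_erase.1 hQ
    have hQ := hfin.mem_toFinset.1 hQ
    have hPQ : P ≤ Q := hP_le Q hQ.1.1 hQM
    exact hQP (le_antisymm (hQ.2 ⟨hP, bot_le⟩ hPQ) hPQ)
  have hnil : ∀ Q : Ideal R, ∃ k : ℕ, Q ∈ minimalPrimes R → Q ≠ P → ∃ s ∉ Q, s * t ^ k = 0 := by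
    intro Q
    by_cases hQ : Q ∈ minimalPrimes R ∧ Q ≠ P
    · obtain ⟨k, hk⟩ := exists_notMem_mul_pow_eq_zero hQ.1 (ht Q hQ.1 hQ.2)
      exact ⟨k, fun _ _ => hk⟩
    · exact ⟨0, fun h1 h2 => absurd ⟨h1, h2⟩ hQ⟩
  choose k hk using hnil
  obtain ⟨K, hK⟩ := (hfin.image k).bddAbove
  have hkill : ∀ x ∈ P, t ^ (K + 1) * x = 0 := by
    intro x hx
    by_contra hne
    -- The annihilator of `t ^ (K + 1) * x` is contained in no maximal ideal.
    obtain ⟨N, hN, hannN⟩ := Ideal.exists_le_maximal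
      (Ideal.span {t ^ (K + 1) * x} : Ideal R).annihilator fun h => hne <| by
        have h1 := (Ideal.eq_top_iff_one _).1 h
        simpa [Submodule.mem_annihilator_span_singleton] using h1
    have hbad : ∀ s ∉ N, s * (t ^ (K + 1) * x) ≠ 0 := fun s hs h0 =>
      hs (hannN ((Submodule.mem_annihilator_span_singleton _ _).2 h0))
    by_cases hPN : P ≤ N
    · obtain ⟨s, hs, hsx⟩ : ∃ s ∉ N, s * x = 0 := by
        rcases hPN.eq_or_lt with h | h
        · -- Here `P` is maximal, so `N = P = M`.
          have hNM : N = M := hN.eq_of_le hM.ne_top (h ▸ hPM)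
          exact hNM ▸ hPM0 x hx
        · exact hR.exists_notMem_mul_eq_zero_of_lt hP hN.ne_top h hx
      exact hbad s hs (by linear_combination t ^ (K + 1) * hsx)
    · have hNp := hN.isPrime
      obtain ⟨Q, hQ, hQN⟩ := Ideal.exists_minimalPrimes_le (bot_le : (⊥ : Ideal R) ≤ N)
      have hQP : Q ≠ P := fun h => hPN (h ▸ hQN)
      rcases hQN.eq_or_lt with h | h
      · obtain ⟨s, hs, hst⟩ := hk Q hQ hQP
        obtain ⟨d, hd⟩ := Nat.exists_eq_add_of_le (hK ⟨Q, hQ, rfl⟩)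
        refine hbad s (h ▸ hs) ?_
        rw [hd, add_assoc, pow_add]
        linear_combination t ^ (d + 1) * x * hst
      · obtain ⟨s, hs, hst⟩ :=
          hR.exists_notMem_mul_eq_zero_of_lt hQ.1.1 hN.ne_top h (ht Q hQ hQP)
        refine hbad s hs ?_
        rw [pow_succ]
        linear_combination t ^ K * x * hst
  have hmem : t ^ (K + 1) ∈ fgMultiplier P :=
    ⟨⊥, Submodule.fg_bot, bot_le, fun x hx => hkill x hx⟩
  exact htM (hM.isPrime.mem_of_pow_mem _ (hθM hmem))

/-- Let `R` be a multiplication ring. Then `R` has only finitely many minimal prime ideals if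
and only if `R` is a Noetherian ring. -/
theorem multiplicationRing_finitelyManyMinimalPrimes_iff_noetherian
    {R : Type u} [CommRing R] (hR : IsMultiplicationRing R) :
    (minimalPrimes R).Finite ↔ IsNoetherianRing R := by
  constructor
  · intro hfin
    exact IsNoetherianRing.of_prime (hR.fg_of_isPrime hfin)
  · intro _
    exact minimalPrimes.finite_of_isNoetherianRing R
end
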